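/- The satisfiability problem for VLDL is decidable: there is a computable function that, given (a natural effective encoding, with states, stack symbols, and atomic propositions drawn from ℕ, of) a VLDL formula φ over a pushdown alphabet Σ̃ partitioning 2^P, decides whether L(φ) ≠ ∅, i.e., whether φ has a model. -/

import Mathlib

/-!
Decidability of satisfiability for VLDL, by reduction to a bounded arithmetic condition.

**Labels.** Let `N` be the code of the formula `φ`. Label each letter of a word with a bitmask of
claimed truth values, one for every number `m ≤ N`, read as the code of a formula. One visibly
pushdown system (`VCode.sysOf`) simulates all guards: from the state that stands for the state `s`
of the guard of `m` it reaches the absorbing state `top` iff that guard has an accepting run,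
passing its tests according to the labels, that ends at a position where the formula behind the
guard is labelled true (for `⟨A⟩`) or not true (for `[A]`). A position is good if its label agrees
with the truth values computed from the label itself and from the set `T` of states that can reach
`top` from there with the empty stack. Labels that are good everywhere are the actual truth values
(`VCode.sat_iff`), and every word has such a labelling, by recursion on codes
(`VCode.label_exists`): tests and arguments of a formula have smaller codes. Hence `φ` is
satisfiable iff some word is good at all positions and lies in the language of a state that only
checks the bit `N` of the first label (`VCode.sat_iff_crit`). Only existential reachability is
needed, although guards are nondeterministic and occur under negation and in `[A]`, because the
labels are required to be exact in both directions.

**Lassos.** A finite word without dangling effects on the stack acts on states by a relation. There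
are three modes of such flat words: well matched (2), with additional returns on the empty stack
(0), and with additional calls that are never matched (1). Whether all positions of a flat word are
good depends on the infinite word behind it only through the set `T` of the latter, so the possible
relations form a least fixed point over a finite set (`Sys.W`). Every infinite word splits into
infinitely many flat factors of mode 0, or of mode 1 after a prefix of mode 0 (`Sys.seq_cases`). By
the pigeonhole principle on `T` a good word yields a loop, and conversely a loop can be repeated
forever (`Sys.crit_iff`).

**Computability.** Sets of states, relations, and sets of summaries are all coded by numbers below
explicit bounds. Membership in the least fixed point means membership in all closed sets, so the
lasso criterion becomes a formula with bounded quantifiers (`VCode.critN_iff`), which defines a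
primitive recursive predicate (`VCode.CritN_p`) of the codes in the input.
-/

/-- The three kinds of letters of a pushdown alphabet: calls, returns, local actions. -/
inductive SymKind : Type
  | call | ret | loc
deriving DecidableEq

/-- The data of a visibly pushdown automaton with states `Fin n` and stack alphabet
`Fin m` (plus an implicit bottom marker `⊥`, represented by the empty stack):
call-, return- and local transitions, initial states and final states. -/
structure VPAData (A : Type) (n m : ℕ) where
  callΔ : Fin n → A → Fin n → Fin m → Bool
  retΔ  : Fin n → A → Option (Fin m) → Fin n → Bool
  locΔ  : Fin n → A → Fin n → Bool
  start : Fin n → Bool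
  final : Fin n → Bool

/-- One step of a visibly pushdown system on configurations (state, stack). Calls push,
returns pop (reading `⊥`, i.e. `none`, on the empty stack and leaving it unchanged),
local actions leave the stack unchanged. -/
def vstep {A : Type} (kind : A → SymKind) {n m : ℕ}
    (callΔ : Fin n → A → Fin n → Fin m → Bool)
    (retΔ : Fin n → A → Option (Fin m) → Fin n → Bool)
    (locΔ : Fin n → A → Fin n → Bool) :
    Fin n × List (Fin m) → A → Fin n × List (Fin m) → Prop :=
  fun c a c' =>
    match kind a with
    | .call => ∃ g, callΔ c.1 a c'.1 g = true ∧ c'.2 = g :: c.2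
    | .ret => (∃ g s, c.2 = g :: s ∧ retΔ c.1 a (some g) c'.1 = true ∧ c'.2 = s) ∨
        (c.2 = [] ∧ retΔ c.1 a none c'.1 = true ∧ c'.2 = [])
    | .loc => locΔ c.1 a c'.1 = true ∧ c'.2 = c.2

def VPAData.step {A : Type} {n m : ℕ} (M : VPAData A n m) (kind : A → SymKind) :=
  vstep kind M.callΔ M.retΔ M.locΔ

/-- Büchi acceptance for a visibly pushdown automaton: some initial infinite run
starting with empty stack visits final states infinitely often. -/
def VPAData.BuchiAccepts {A : Type} {n m : ℕ} (M : VPAData A n m) (kind : A → SymKind)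
    (α : ℕ → A) : Prop :=
  ∃ ρ : ℕ → Fin n × List (Fin m),
    M.start (ρ 0).1 = true ∧ (ρ 0).2 = [] ∧
    (∀ i, M.step kind (ρ i) (α i) (ρ (i+1))) ∧
    (∀ i, ∃ j, i ≤ j ∧ M.final (ρ j).1 = true)

/-- VLDL formulas: atoms (from `V`), Boolean connectives, and temporal operators
`⟨A⟩φ`/`[A]φ` guarded by testing visibly pushdown automata over the alphabet `A`;
the guard is given by its `VPAData` together with the map `t` assigning a test
formula to every state. -/
inductive VLDL (V A : Type) : Type
  | atom (v : V)
  | neg (φ : VLDL V A)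
  | and (φ ψ : VLDL V A)
  | or (φ ψ : VLDL V A)
  | dia (n m : ℕ) (M : VPAData A n m) (t : Fin n → VLDL V A) (φ : VLDL V A)
  | box (n m : ℕ) (M : VPAData A n m) (t : Fin n → VLDL V A) (φ : VLDL V A)

/-- Satisfaction of VLDL formulas on infinite words `α : ℕ → A` at a position `k`,
where `val v a` states that atom `v` holds at letter `a`. The guard relation
`(k, l) ∈ R_A(α)` is inlined: there is an initial accepting run of the guard on
`α_k ⋯ α_{l-1}` all of whose states' tests are satisfied at the respective positions. -/
def VLDL.sat {V A : Type} (val : V → A → Prop) (kind : A → SymKind) :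
    VLDL V A → (ℕ → A) → ℕ → Prop
  | .atom v, α, k => val v (α k)
  | .neg φ, α, k => ¬ VLDL.sat val kind φ α k
  | .and φ ψ, α, k => VLDL.sat val kind φ α k ∧ VLDL.sat val kind ψ α k
  | .or φ ψ, α, k => VLDL.sat val kind φ α k ∨ VLDL.sat val kind ψ α k
  | .dia n m M t φ, α, k => ∃ l, k ≤ l ∧
      (∃ ρ : ℕ → Fin n × List (Fin m),
        M.start (ρ k).1 = true ∧ (ρ k).2 = [] ∧
        (∀ i, k ≤ i → i < l → M.step kind (ρ i) (α i) (ρ (i+1))) ∧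
        M.final (ρ l).1 = true ∧
        (∀ i, k ≤ i → i ≤ l → VLDL.sat val kind (t (ρ i).1) α i)) ∧
      VLDL.sat val kind φ α l
  | .box n m M t φ, α, k => ∀ l, k ≤ l →
      (∃ ρ : ℕ → Fin n × List (Fin m),
        M.start (ρ k).1 = true ∧ (ρ k).2 = [] ∧
        (∀ i, k ≤ i → i < l → M.step kind (ρ i) (α i) (ρ (i+1))) ∧
        M.final (ρ l).1 = true ∧
        (∀ i, k ≤ i → i ≤ l → VLDL.sat val kind (t (ρ i).1) α i)) →
      VLDL.sat val kind φ α l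

/-- The size of a VLDL formula: the number of subformulas (including the tests of all
guard automata) plus the total number of states of all guard automata. -/
def VLDL.size {V A : Type} : VLDL V A → ℕ
  | .atom _ => 1
  | .neg φ => φ.size + 1
  | .and φ ψ => φ.size + ψ.size + 1
  | .or φ ψ => φ.size + ψ.size + 1
  | .dia n _ _ t φ => φ.size + n + 1 + (List.ofFn (fun q => (t q).size)).sum
  | .box n _ _ t φ => φ.size + n + 1 + (List.ofFn (fun q => (t q).size)).sum

/-- The letter of `2^P` (for `P = Fin p`) encoded by the bitmask `i`. -/
def letterOf (p : ℕ) (i : ℕ) : Fin p → Bool := fun j => Nat.testBit i j.val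

def symCode : SymKind → ℕ
  | .call => 0
  | .ret => 1
  | .loc => 2

/-- A natural effective encoding of the partition of `2^P` into calls, returns and
local actions as a natural number. -/
def kindCode (p : ℕ) (kind : (Fin p → Bool) → SymKind) : ℕ :=
  Encodable.encode (List.ofFn (fun i : Fin (2 ^ p) => symCode (kind (letterOf p i.val))))

/-- A natural effective encoding of the data of a visibly pushdown automaton over the
alphabet `2^P` (for `P = Fin p`), with states and stack symbols drawn from `ℕ`. -/
def VPAData.codeP {p n m : ℕ} (M : VPAData (Fin p → Bool) n m) : ℕ :=
  Encodable.encode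
    (n, m,
      List.ofFn (fun q : Fin n => List.ofFn (fun i : Fin (2 ^ p) =>
        List.ofFn (fun q' : Fin n => List.ofFn (fun g : Fin m =>
          M.callΔ q (letterOf p i.val) q' g)))),
      List.ofFn (fun q : Fin n => List.ofFn (fun i : Fin (2 ^ p) =>
        List.ofFn (fun g : Fin m => List.ofFn (fun q' : Fin n =>
          M.retΔ q (letterOf p i.val) (some g) q')))),
      List.ofFn (fun q : Fin n => List.ofFn (fun i : Fin (2 ^ p) =>
        List.ofFn (fun q' : Fin n => M.retΔ q (letterOf p i.val) none q'))),
      List.ofFn (fun q : Fin n => List.ofFn (fun i : Fin (2 ^ p) =>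
        List.ofFn (fun q' : Fin n => M.locΔ q (letterOf p i.val) q'))),
      List.ofFn (fun q : Fin n => M.start q),
      List.ofFn (fun q : Fin n => M.final q))

/-- A natural effective encoding of VLDL formulas over `2^P` (for `P = Fin p`), with
atomic propositions, states and stack symbols drawn from `ℕ`. -/
def VLDL.code {p : ℕ} : VLDL (Fin p) (Fin p → Bool) → ℕ
  | .atom v => Nat.pair 0 v.val
  | .neg φ => Nat.pair 1 φ.code
  | .and φ ψ => Nat.pair 2 (Nat.pair φ.code ψ.code)
  | .or φ ψ => Nat.pair 3 (Nat.pair φ.code ψ.code)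
  | .dia _ _ M t φ => Nat.pair 4 (Nat.pair M.codeP
      (Nat.pair (Encodable.encode (List.ofFn (fun q => (t q).code))) φ.code))
  | .box _ _ M t φ => Nat.pair 5 (Nat.pair M.codeP
      (Nat.pair (Encodable.encode (List.ofFn (fun q => (t q).code))) φ.code))

/-! ### Visibly pushdown systems -/

/-- A visibly pushdown system, in general infinite, over the letters `B` with states `Q` and stack
symbols `G`. Acceptance means reaching the distinguished state `top`, which absorbs: it has a
transition to itself on every letter, so that accepting is monotone in the number of steps.
`ret0` gives the return transitions taken on the empty stack. `good b t` is a consistency condition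
on a letter `b`, to be evaluated at the set `t` of states that accept the word starting with `b`. -/
structure Sys (B Q G : Type) where
  kind : B → SymKind
  call : B → Q → Q → G → Prop
  ret : B → Q → G → Q → Prop
  ret0 : B → Q → Q → Prop
  loc : B → Q → Q → Prop
  top : Q
  good : B → Set Q → Prop
  top_call : ∀ b, ∃ g, call b top top g
  top_ret : ∀ b g, ret b top g top
  top_ret0 : ∀ b, ret0 b top top
  top_loc : ∀ b, loc b top top

namespace Sys

variable {B Q G : Type} (S : Sys B Q G)

def Step (c : Q × List G) (b : B) (d : Q × List G) : Prop :=
  match S.kind b with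
  | .call => ∃ g, S.call b c.1 d.1 g ∧ d.2 = g :: c.2
  | .ret => (∃ g s, c.2 = g :: s ∧ S.ret b c.1 g d.1 ∧ d.2 = s) ∨
      (c.2 = [] ∧ S.ret0 b c.1 d.1 ∧ d.2 = [])
  | .loc => S.loc b c.1 d.1 ∧ d.2 = c.2

/-- `Run w c d`: reading the finite word `w` leads from configuration `c` to `d`. -/
def Run : List B → Q × List G → Q × List G → Prop
  | [], c, d => c = d
  | b :: w, c, d => ∃ e, S.Step c b e ∧ Run w e d

/-- Some run on `α` from `c` is in state `top` after exactly `n` steps. -/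
def AccN : ℕ → Stream' B → Q × List G → Prop
  | 0, _, c => c.1 = S.top
  | n + 1, α, c => ∃ d, S.Step c α.head d ∧ AccN n α.tail d

def Acc (α : Stream' B) (c : Q × List G) : Prop := ∃ n, S.AccN n α c

/-- The states from which `α` is accepted when starting with the empty stack. -/
def T (α : Stream' B) : Set Q := {q | S.Acc α (q, [])}

/-- Preimage of the set `t` under the relation `R`. -/
def pre (R : Q → Q → Prop) (t : Set Q) : Set Q := {q | ∃ q', R q q' ∧ q' ∈ t}

/-- State relation of a matched pair: push on the call `b`, move along `R` with the pushed symbol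
untouched, pop that symbol on the return `b'`. -/
def blk (b : B) (R : Q → Q → Prop) (b' : B) (q q' : Q) : Prop :=
  ∃ g p p', S.call b q p g ∧ R p p' ∧ S.ret b' p' g q'

/-- State relation of a call whose pushed symbol is forgotten. -/
def push (b : B) (q q' : Q) : Prop := ∃ g, S.call b q q' g

/-! ### Flat words and their summaries -/

/-- `FW μ w R`: the word `w` is flat in mode `μ` and induces the relation `R` on states.
* Mode 2: `w` is well matched, so it neither depends on nor changes the stack below.
* Mode 0: `w` may also contain returns read on the empty stack; it is meant to be read from the
  empty stack, to which it leads back.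
* Mode 1: `w` may also contain calls that are never matched, neither in `w` nor in what follows.
In all modes `w` induces a relation on states alone, see `FW.flat`. -/
inductive FW : ℕ → List B → (Q → Q → Prop) → Prop
  | nil : FW 2 [] Eq
  | loc (μ : ℕ) (b : B) : μ < 3 → S.kind b = .loc → FW μ [b] (S.loc b)
  | blk (μ : ℕ) (b : B) (w : List B) (R : Q → Q → Prop) (b' : B) : μ < 3 → S.kind b = .call →
      S.kind b' = .ret → FW 2 w R → FW μ (b :: (w ++ [b'])) (S.blk b R b')
  | ret (b : B) : S.kind b = .ret → FW 0 [b] (S.ret0 b)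
  | call (b : B) : S.kind b = .call → FW 1 [b] (S.push b)
  | concat (μ : ℕ) (w w' : List B) (R R' : Q → Q → Prop) : FW μ w R → FW μ w' R' →
      FW μ (w ++ w') (Relation.Comp R R')

/-- `W μ R t`: `R` is the relation of some mode-`μ` word all of whose letters are good when the word
is followed by an infinite word whose accepting states are `t`. The rules mirror those of `FW`; the
only data of the future that they use is `t`, and this makes `W` a least fixed point over a finite
set when there are finitely many states. In the rule for a matched pair, the letter `b'` and the
word inside the pair are judged with the empty stack, where `b'` acts through `ret0`, because
goodness refers to acceptance from the empty stack. -/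
inductive W : ℕ → (Q → Q → Prop) → Set Q → Prop
  | nil (t : Set Q) : W 2 Eq t
  | loc (μ : ℕ) (b : B) (t : Set Q) : μ < 3 → S.kind b = .loc → S.good b (pre (S.loc b) t) →
      W μ (S.loc b) t
  | blk (μ : ℕ) (b : B) (R : Q → Q → Prop) (b' : B) (t : Set Q) : μ < 3 → S.kind b = .call →
      S.kind b' = .ret → S.good b' (pre (S.ret0 b') t) → W 2 R (pre (S.ret0 b') t) →
      S.good b (pre (S.blk b R b') t) → W μ (S.blk b R b') t
  | ret (b : B) (t : Set Q) : S.kind b = .ret → S.good b (pre (S.ret0 b) t) → W 0 (S.ret0 b) t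
  | call (b : B) (t : Set Q) : S.kind b = .call → S.good b (pre (S.push b) t) → W 1 (S.push b) t
  | concat (μ : ℕ) (R R' : Q → Q → Prop) (t : Set Q) : W μ R (pre R' t) → W μ R' t →
      W μ (Relation.Comp R R') t

theorem pre_comp (R R' : Q → Q → Prop) (t : Set Q) :
    pre (Relation.Comp R R') t = pre R (pre R' t) := by
  ext q; simp only [pre, Relation.Comp, Set.mem_ofPred_eq]
  constructor
  · rintro ⟨q', ⟨p, h1, h2⟩, h3⟩; exact ⟨p, h1, q', h2, h3⟩
  · rintro ⟨p, h1, q', h2, h3⟩; exact ⟨q', ⟨p, h1, h2⟩, h3⟩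

theorem run_append (w w' : List B) (c d : Q × List G) :
    S.Run (w ++ w') c d ↔ ∃ e, S.Run w c e ∧ S.Run w' e d := by
  induction w generalizing c with
  | nil => simp [Run]
  | cons b w ih =>
    simp only [List.cons_append, Run, ih]
    constructor
    · rintro ⟨e, h, f, h1, h2⟩; exact ⟨f, ⟨e, h, h1⟩, h2⟩
    · rintro ⟨f, ⟨e, h, h1⟩, h2⟩; exact ⟨e, h, f, h1, h2⟩

theorem step_top (b : B) (s : List G) : ∃ s', S.Step (S.top, s) b (S.top, s') := by
  unfold Step
  cases S.kind b with
  | call => obtain ⟨g, hg⟩ := S.top_call b; exact ⟨g :: s, g, hg, rfl⟩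
  | ret =>
    cases s with
    | nil => exact ⟨[], Or.inr ⟨rfl, S.top_ret0 b, rfl⟩⟩
    | cons g s => exact ⟨s, Or.inl ⟨g, s, rfl, S.top_ret b g, rfl⟩⟩
  | loc => exact ⟨s, S.top_loc b, rfl⟩

theorem run_top (w : List B) (s : List G) : ∃ s', S.Run w (S.top, s) (S.top, s') := by
  induction w generalizing s with
  | nil => exact ⟨s, rfl⟩
  | cons b w ih =>
    obtain ⟨s1, h1⟩ := S.step_top b s
    obtain ⟨s2, h2⟩ := ih s1
    exact ⟨s2, _, h1, h2⟩

theorem accN_succ (n : ℕ) (α : Stream' B) (c : Q × List G) (h : S.AccN n α c) :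
    S.AccN (n + 1) α c := by
  induction n generalizing α c with
  | zero =>
    obtain ⟨q, s⟩ := c
    cases (h : q = S.top)
    obtain ⟨s', h'⟩ := S.step_top α.head s
    exact ⟨_, h', rfl⟩
  | succ n ih =>
    obtain ⟨d, h1, h2⟩ := h
    exact ⟨d, h1, ih _ _ h2⟩

theorem accN_append (w : List B) (α : Stream' B) (n : ℕ) (c : Q × List G)
    (h : S.AccN n (w ++ₛ α) c) : ∃ d, S.Run w c d ∧ S.AccN (n - w.length) α d := by
  induction w generalizing n c with
  | nil => exact ⟨c, rfl, h⟩
  | cons b w ih =>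
    have key : ∀ m, S.AccN (m + 1) ((b :: w) ++ₛ α) c →
        ∃ d, S.Run (b :: w) c d ∧ S.AccN (m - w.length) α d := by
      rintro m ⟨e, h1, h2⟩
      obtain ⟨d, h3, h4⟩ := ih m e h2
      exact ⟨d, ⟨e, h1, h3⟩, h4⟩
    cases n with
    | zero =>
      have := key 0 (S.accN_succ 0 _ _ h)
      simpa using this
    | succ m => simpa using key m h

theorem acc_append (w : List B) (α : Stream' B) (c : Q × List G) :
    S.Acc (w ++ₛ α) c ↔ ∃ d, S.Run w c d ∧ S.Acc α d := by
  constructor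
  · rintro ⟨n, h⟩
    obtain ⟨d, h1, h2⟩ := S.accN_append w α n c h
    exact ⟨d, h1, _, h2⟩
  · rintro ⟨d, h1, n, h2⟩
    induction w generalizing c with
    | nil => cases h1; exact ⟨n, h2⟩
    | cons b w ih =>
      obtain ⟨e, h3, h4⟩ := h1
      obtain ⟨m, h5⟩ := ih e h4
      exact ⟨m + 1, e, h3, h5⟩

/-- On the stacks admissible for mode `μ`, the runs on `w` are exactly those prescribed by the state
relation `R`, and `w` restores the stack unless `μ = 1`. -/
def Flat (μ : ℕ) (w : List B) (R : Q → Q → Prop) : Prop :=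
  ∀ s : List G, (μ = 0 → s = []) → ∀ q,
    (∀ c, S.Run w (q, s) c → (μ ≠ 1 → c.2 = s) ∧ R q c.1) ∧
    (∀ q', R q q' → ∃ s', (μ ≠ 1 → s' = s) ∧ S.Run w (q, s) (q', s'))

theorem run_single (b : B) (c d : Q × List G) : S.Run [b] c d ↔ S.Step c b d := by
  simp [Run]

theorem FW.flat {μ : ℕ} {w : List B} {R : Q → Q → Prop} (h : S.FW μ w R) : S.Flat μ w R := by
  induction h with
  | nil =>
    intro s _ q
    exact ⟨fun c hc => by cases hc; simp, fun q' hq => ⟨s, by simp, by cases hq; rfl⟩⟩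
  | loc μ b _ hk =>
    intro s _ q
    simp only [run_single, Step, hk]
    exact ⟨fun c hc => ⟨fun _ => hc.2, hc.1⟩, fun q' hq => ⟨s, fun _ => rfl, hq, rfl⟩⟩
  | ret b hk =>
    intro s hs q
    cases hs rfl
    simp only [run_single, Step, hk]
    refine ⟨fun c hc => ?_, fun q' hq => ⟨[], fun _ => rfl, Or.inr ⟨trivial, hq, rfl⟩⟩⟩
    rcases hc with ⟨g, s, h, _⟩ | ⟨_, h1, h2⟩
    · simp at h
    · exact ⟨fun _ => h2, h1⟩
  | call b hk =>
    intro s _ q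
    simp only [run_single, Step, hk]
    refine ⟨fun c hc => ?_, fun q' hq => ?_⟩
    · obtain ⟨g, hg, _⟩ := hc
      exact ⟨by simp, g, hg⟩
    · obtain ⟨g, hg⟩ := hq
      exact ⟨g :: s, by simp, g, hg, rfl⟩
  | concat μ w w' R R' _ _ ih ih' =>
    intro s hs q
    refine ⟨fun c hc => ?_, fun q' hq => ?_⟩
    · obtain ⟨⟨p, s1⟩, h1, h2⟩ := (S.run_append _ _ _ _).1 hc
      obtain ⟨h3, h4⟩ := (ih s hs q).1 _ h1
      have hs1 : μ = 0 → s1 = [] := fun h => by rw [← hs h]; exact h3 (by omega)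
      obtain ⟨h5, h6⟩ := (ih' s1 hs1 p).1 _ h2
      exact ⟨fun h => (h5 h).trans (h3 h), p, h4, h6⟩
    · obtain ⟨p, h1, h2⟩ := hq
      obtain ⟨s1, h3, h4⟩ := (ih s hs q).2 _ h1
      have hs1 : μ = 0 → s1 = [] := fun h => by rw [← hs h]; exact h3 (by omega)
      obtain ⟨s2, h5, h6⟩ := (ih' s1 hs1 p).2 _ h2
      exact ⟨s2, fun h => (h5 h).trans (h3 h), (S.run_append _ _ _ _).2 ⟨_, h4, h6⟩⟩
  | blk μ b w R b' _ hk hk' _ ih =>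
    intro s hs q
    refine ⟨fun c hc => ?_, fun q' hq => ?_⟩
    · obtain ⟨⟨p, s1⟩, h1, h2⟩ := hc
      obtain ⟨⟨p', s2⟩, h3, h4⟩ := (S.run_append _ _ _ _).1 h2
      obtain ⟨h5, h6⟩ := (ih s1 (by simp) p).1 _ h3
      have h5 : s2 = s1 := h5 (by simp)
      subst h5
      simp only [run_single, Step, hk, hk'] at h1 h4
      obtain ⟨g, hg, hs2⟩ := h1
      subst hs2
      rcases h4 with ⟨g', s', h7, h8, h9⟩ | ⟨h7, _⟩
      · cases h7
        exact ⟨fun _ => h9, g, p, p', hg, h6, h8⟩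
      · simp at h7
    · obtain ⟨g, p, p', h1, h2, h3⟩ := hq
      obtain ⟨s2, h4, h5⟩ := (ih (g :: s) (by simp) p).2 _ h2
      cases h4 (by simp)
      refine ⟨s, fun _ => rfl, (p, g :: s), ?_, (S.run_append _ _ _ _).2 ⟨_, h5, ?_⟩⟩
      · simp only [Step, hk]; exact ⟨g, h1, rfl⟩
      · simp only [run_single, Step, hk']; exact Or.inl ⟨g, s, rfl, h3, rfl⟩

/-- On the stacks admissible for mode `μ` (arbitrary ones for `μ = 1`, the empty one otherwise),
acceptance of `α` is independent of the stack and given by the set of states `t`. -/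
def HH (μ : ℕ) (α : Stream' B) (t : Set Q) : Prop :=
  ∀ s : List G, (μ ≠ 1 → s = []) → ∀ q, S.Acc α (q, s) ↔ q ∈ t

theorem HH.zero {μ : ℕ} {α : Stream' B} {t : Set Q} (h : S.HH μ α t) (ν : ℕ) (hν : ν ≠ 1) :
    S.HH ν α t := fun s hs q => h s (fun _ => hs hν) q

theorem HH.eq {μ : ℕ} {α : Stream' B} {t : Set Q} (h : S.HH μ α t) : S.T α = t := by
  ext q; exact h [] (fun _ => rfl) q

/-- Prepending a flat word to an infinite word acts on the set of accepting states by preimage. -/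
theorem HH.append {μ : ℕ} {α : Stream' B} {t : Set Q} (h : S.HH μ α t) {w : List B}
    {R : Q → Q → Prop} (hf : S.Flat μ w R) : S.HH μ (w ++ₛ α) (pre R t) := by
  intro s hs q
  have hs' : μ = 0 → s = [] := fun h => hs (by omega)
  rw [acc_append]
  constructor
  · rintro ⟨⟨q', s'⟩, h1, h2⟩
    obtain ⟨h3, h4⟩ := (hf s hs' q).1 _ h1
    exact ⟨q', h4, (h s' (fun hm => (h3 hm).trans (hs hm)) q').1 h2⟩
  · rintro ⟨q', h1, h2⟩
    obtain ⟨s', h3, h4⟩ := (hf s hs' q).2 _ h1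
    exact ⟨_, h4, (h s' (fun hm => (h3 hm).trans (hs hm)) q').2 h2⟩

theorem HH.zeroT (α : Stream' B) : S.HH 0 α (S.T α) := by
  intro s hs q; cases hs (by simp); rfl

/-- All positions of the prefix `w` of `w ++ₛ α` are good. -/
def GoodOn : List B → Stream' B → Prop
  | [], _ => True
  | b :: w, α => S.good b (S.T ((b :: w) ++ₛ α)) ∧ GoodOn w α

theorem goodOn_append (w w' : List B) (α : Stream' B) :
    S.GoodOn (w ++ w') α ↔ S.GoodOn w (w' ++ₛ α) ∧ S.GoodOn w' α := by
  induction w with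
  | nil => simp [GoodOn]
  | cons b w ih =>
    simp only [List.cons_append, GoodOn, ih, ← Stream'.append_append_stream, and_assoc]

/-- The first `n` positions of `α` are good. -/
def GoodN : ℕ → Stream' B → Prop
  | 0, _ => True
  | n + 1, α => S.good α.head (S.T α) ∧ GoodN n α.tail

def AllGood (α : Stream' B) : Prop := ∀ n, S.GoodN n α

theorem goodN_append (w : List B) (α : Stream' B) (n : ℕ) (h : S.GoodOn w α)
    (h' : S.GoodN (n - w.length) α) : S.GoodN n (w ++ₛ α) := by
  induction w generalizing n with
  | nil => exact h'
  | cons b w ih =>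
    cases n with
    | zero => trivial
    | succ n => exact ⟨h.1, ih n h.2 (by simpa using h')⟩

theorem allGood_append (w : List B) (α : Stream' B) :
    S.AllGood (w ++ₛ α) ↔ S.GoodOn w α ∧ S.AllGood α := by
  constructor
  · intro h
    induction w with
    | nil => exact ⟨trivial, h⟩
    | cons b w ih =>
      have := ih (fun n => (h (n + 1)).2)
      exact ⟨⟨(h 1).1, this.1⟩, this.2⟩
  · rintro ⟨h1, h2⟩ n
    exact S.goodN_append w α n h1 (h2 _)

/-- Goodness of one period suffices for a periodic word, since the suffix seen after each period is
the same. -/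
theorem allGood_cycle (V : List B) (hV : V ≠ []) (h : S.GoodOn V (Stream'.cycle V hV)) :
    S.AllGood (Stream'.cycle V hV) := by
  intro n
  induction n using Nat.strong_induction_on with
  | _ n ih =>
    rcases Nat.eq_zero_or_pos n with rfl | hn
    · trivial
    · rw [Stream'.cycle_eq]
      have : 0 < V.length := List.length_pos_of_ne_nil hV
      exact S.goodN_append _ _ _ h (ih _ (by omega))

/-- Every summary is realized by one word, which works for all futures with the right set of
accepting states. -/
theorem W.sound {μ : ℕ} {R : Q → Q → Prop} {t : Set Q} (h : S.W μ R t) :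
    ∃ w, S.FW μ w R ∧ ∀ α, S.HH μ α t → S.GoodOn w α := by
  induction h with
  | nil t => exact ⟨[], .nil, fun _ _ => trivial⟩
  | loc μ b t hm hk hg =>
    have hf := FW.loc μ b hm hk
    refine ⟨[b], hf, fun α hα => ⟨?_, trivial⟩⟩
    rw [(hα.append S (hf.flat S)).eq]; exact hg
  | ret b t hk hg =>
    have hf := FW.ret b hk
    refine ⟨[b], hf, fun α hα => ⟨?_, trivial⟩⟩
    rw [(hα.append S (hf.flat S)).eq]; exact hg
  | call b t hk hg =>
    have hf := FW.call b hk
    refine ⟨[b], hf, fun α hα => ⟨?_, trivial⟩⟩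
    rw [(hα.append S (hf.flat S)).eq]; exact hg
  | concat μ R R' t _ _ ih ih' =>
    obtain ⟨w, h1, h2⟩ := ih
    obtain ⟨w', h1', h2'⟩ := ih'
    refine ⟨w ++ w', .concat _ _ _ _ _ h1 h1', fun α hα => ?_⟩
    rw [goodOn_append]
    exact ⟨h2 _ (hα.append S (h1'.flat S)), h2' _ hα⟩
  | blk μ b R b' t hm hk hk' hg' _ hg ih =>
    obtain ⟨w, h1, h2⟩ := ih
    have hf := FW.blk μ b w R b' hm hk hk' h1
    refine ⟨_, hf, fun α hα => ⟨?_, ?_⟩⟩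
    · rw [(hα.append S (hf.flat S)).eq]; exact hg
    · have hr := (hα.zero S 0 (by simp)).append S ((FW.ret b' hk').flat S)
      rw [goodOn_append]
      refine ⟨h2 _ (hr.zero S 2 (by simp)), ?_, trivial⟩
      rw [hr.eq]; exact hg'

/-- Conversely, a flat word whose positions are good in front of `α` yields a summary, provided the
acceptance of `α` does not depend on the stacks that mode `μ` can leave behind. -/
theorem FW.toW {μ : ℕ} {w : List B} {R : Q → Q → Prop} (h : S.FW μ w R) (α : Stream' B)
    (t : Set Q) (hα : S.HH μ α t) (hg : S.GoodOn w α) : S.W μ R t := by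
  induction h generalizing α t with
  | nil => exact .nil t
  | loc μ b hm hk =>
    refine .loc μ b t hm hk ?_
    rw [← (hα.append S ((FW.loc μ b hm hk).flat S)).eq]; exact hg.1
  | ret b hk =>
    refine .ret b t hk ?_
    rw [← (hα.append S ((FW.ret b hk).flat S)).eq]; exact hg.1
  | call b hk =>
    refine .call b t hk ?_
    rw [← (hα.append S ((FW.call b hk).flat S)).eq]; exact hg.1
  | concat μ w w' R R' h h' ih ih' =>
    rw [goodOn_append] at hg
    exact .concat _ _ _ _ (ih _ _ (hα.append S (h'.flat S)) hg.1) (ih' _ _ hα hg.2)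
  | blk μ b w R b' hm hk hk' h ih =>
    have hr := (hα.zero S 0 (by simp)).append S ((FW.ret b' hk').flat S)
    have hg2 := (S.goodOn_append _ _ _).1 hg.2
    refine .blk μ b R b' t hm hk hk' ?_ (ih _ _ (hr.zero S 2 (by simp)) hg2.1) ?_
    · rw [← hr.eq]; exact hg2.2.1
    · rw [← (hα.append S ((FW.blk μ b w R b' hm hk hk' h).flat S)).eq]; exact hg.1

theorem FW.ne_nil {μ : ℕ} {w : List B} {R : Q → Q → Prop} (h : S.FW μ w R) (hμ : μ ≠ 2) :
    w ≠ [] := by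
  induction h with
  | nil => simp at hμ
  | concat μ w w' R R' _ _ ih ih' => simp [ih hμ]
  | _ => simp

/-! ### Factorization of infinite words and the lasso criterion -/

/-- The composition of the `k` relations `R n, …, R (n + k - 1)`. -/
def RR (R : ℕ → Q → Q → Prop) : ℕ → ℕ → Q → Q → Prop
  | _, 0 => Eq
  | n, k + 1 => Relation.Comp (R n) (RR R (n + 1) k)

/-- The suffixes `σ n` of the infinite word `σ 0` cut it into the nonempty factors `w n`, flat in mode
`μ` with relations `R n`. -/
structure FlatSeq (μ : ℕ) (σ : ℕ → Stream' B) (w : ℕ → List B) (R : ℕ → Q → Q → Prop) :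
    Prop where
  ne : ∀ n, w n ≠ []
  fw : ∀ n, S.FW μ (w n) (R n)
  eq : ∀ n, σ n = w n ++ₛ σ (n + 1)

variable {S} {μ : ℕ} {σ : ℕ → Stream' B} {w : ℕ → List B} {R : ℕ → Q → Q → Prop}

/-- Along a flat factorization acceptance only depends on the relations of the factors. Looking at
the cuts is enough because `top` is absorbing. -/
theorem FlatSeq.acc_iff (h : S.FlatSeq μ σ w R) (n : ℕ) (q : Q) (s : List G)
    (hs : μ ≠ 1 → s = []) : S.Acc (σ n) (q, s) ↔ ∃ k, RR R n k q S.top := by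
  constructor
  · rintro ⟨l, hl⟩
    induction l using Nat.strong_induction_on generalizing n q s with
    | _ l ih =>
      rcases Nat.eq_zero_or_pos l with rfl | hl0
      · exact ⟨0, hl⟩
      · rw [h.eq n] at hl
        obtain ⟨⟨q', s'⟩, h1, h2⟩ := S.accN_append _ _ _ _ hl
        obtain ⟨h3, h4⟩ := ((h.fw n).flat S s (fun hm => hs (by omega)) q).1 _ h1
        have := List.length_pos_of_ne_nil (h.ne n)
        obtain ⟨k, hk⟩ := ih _ (by omega) (n + 1) q' s' (fun hm => (h3 hm).trans (hs hm)) h2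
        exact ⟨k + 1, q', h4, hk⟩
  · rintro ⟨k, hk⟩
    induction k generalizing n q s with
    | zero => exact ⟨0, hk⟩
    | succ k ih =>
      obtain ⟨q', h1, h2⟩ := hk
      obtain ⟨s', h3, h4⟩ := ((h.fw n).flat S s (fun hm => hs (by omega)) q).2 _ h1
      rw [h.eq n, acc_append]
      exact ⟨_, h4, ih (n + 1) q' s' (fun hm => (h3 hm).trans (hs hm)) h2⟩

theorem FlatSeq.hh (h : S.FlatSeq μ σ w R) (n : ℕ) : S.HH μ (σ n) (S.T (σ n)) := by
  intro s hs q
  rw [h.acc_iff n q s hs]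
  exact (h.acc_iff n q [] (fun _ => rfl)).symm

theorem FlatSeq.T_eq (h : S.FlatSeq μ σ w R) (n : ℕ) :
    S.T (σ n) = pre (R n) (S.T (σ (n + 1))) := by
  have := (h.hh (n + 1)).append S ((h.fw n).flat S)
  rw [← h.eq] at this
  exact this.eq

theorem FlatSeq.T_RR (h : S.FlatSeq μ σ w R) (n k : ℕ) :
    S.T (σ n) = pre (RR R n k) (S.T (σ (n + k))) := by
  induction k generalizing n with
  | zero => ext q; simp [pre, RR]
  | succ k ih => rw [h.T_eq, RR, pre_comp, ih (n + 1)]; congr 4; omega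

theorem FlatSeq.rr_succ (h : S.FlatSeq μ σ w R) {n k : ℕ} {q : Q}
    (hk : RR R n k q S.top) : RR R n (k + 1) q S.top := by
  induction k generalizing n q with
  | zero =>
    cases (hk : q = S.top)
    obtain ⟨s', hr⟩ := S.run_top (w n) []
    exact ⟨_, (((h.fw n).flat S [] (fun _ => rfl) S.top).1 _ hr).2, rfl⟩
  | succ k ih =>
    obtain ⟨q', h1, h2⟩ := hk
    exact ⟨q', h1, ih h2⟩

theorem FlatSeq.rr_mono (h : S.FlatSeq μ σ w R) {n k l : ℕ} (hkl : k ≤ l) {q : Q}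
    (hk : RR R n k q S.top) : RR R n l q S.top := by
  induction l, hkl using Nat.le_induction with
  | base => exact hk
  | succ l _ ih => exact h.rr_succ ih

theorem FlatSeq.toW (h : S.FlatSeq μ σ w R) (hg : ∀ n, S.AllGood (σ n)) (n k : ℕ) :
    S.W μ (RR R n (k + 1)) (S.T (σ (n + (k + 1)))) := by
  have one : ∀ n, S.W μ (R n) (S.T (σ (n + 1))) := by
    intro n
    refine (h.fw n).toW S (σ (n + 1)) _ (h.hh _) ?_
    have := hg n
    rw [h.eq, allGood_append] at this
    exact this.1
  induction k generalizing n with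
  | zero =>
    have : RR R n (0 + 1) = R n := by
      funext q q'; simp [RR, Relation.Comp]
    rw [this]; exact one n
  | succ k ih =>
    rw [RR]
    have e : n + (k + 1 + 1) = n + 1 + (k + 1) := by omega
    rw [e]
    refine .concat _ _ _ _ ?_ (ih (n + 1))
    rw [← h.T_RR]; exact one n

variable (S) in
/-- A summary in mode `μ` that reproduces the set `t` of accepting states of the future, and in which
exactly the states in `t` reach `top` within a single pass. Repeating a word with this summary
forever gives an infinite word with accepting states `t`. -/
def Loop (μ : ℕ) (t : Set Q) : Prop :=
  ∃ R, S.W μ R t ∧ pre R t = t ∧ pre R {S.top} = t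

/-- From a flat factorization of a good word a loop is extracted by the pigeonhole principle: some
set `t` is the set of accepting states at infinitely many cuts. Two such cuts are chosen so far
apart that every state in `t` reaches `top` in between; `R₁` summarizes the factors before the
first of them. -/
theorem FlatSeq.loop [Finite Q] (h : S.FlatSeq μ σ w R) (hg : ∀ n, S.AllGood (σ n)) :
    ∃ t R₁, S.Loop μ t ∧ S.W μ R₁ t ∧ pre R₁ t = S.T (σ 0) := by
  obtain ⟨t, ht⟩ := Finite.exists_infinite_fiber (fun n => S.T (σ n))
  have ht : ∀ N, ∃ n > N, S.T (σ n) = t := by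
    have := (Set.infinite_coe_iff.1 ht)
    intro N
    obtain ⟨n, h1, h2⟩ := this.exists_gt N
    exact ⟨n, h2, h1⟩
  obtain ⟨n0, hn0, e0⟩ := ht 0
  obtain ⟨k0, hk0⟩ : ∃ k0, ∀ q ∈ t, RR R n0 k0 q S.top := by
    have : ∀ q, ∃ k, q ∈ t → RR R n0 k q S.top := by
      intro q
      by_cases hq : q ∈ t
      · rw [← e0] at hq
        obtain ⟨k, hk⟩ := (h.acc_iff n0 q [] (fun _ => rfl)).1 hq
        exact ⟨k, fun _ => hk⟩
      · exact ⟨0, fun h => absurd h hq⟩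
    choose k hk using this
    obtain ⟨M, hM⟩ := (Set.finite_range k).bddAbove
    exact ⟨M, fun q hq => h.rr_mono (hM ⟨q, rfl⟩) (hk q hq)⟩
  obtain ⟨n1, hn1, e1⟩ := ht (n0 + k0)
  obtain ⟨l, rfl⟩ : ∃ l, n1 = n0 + (l + 1) := ⟨n1 - n0 - 1, by omega⟩
  obtain ⟨m, rfl⟩ : ∃ m, n0 = m + 1 := ⟨n0 - 1, by omega⟩
  refine ⟨t, RR R 0 (m + 1), ⟨RR R (m + 1) (l + 1), ?_, ?_, ?_⟩, ?_, ?_⟩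
  · have := h.toW hg (m + 1) l
    rwa [e1] at this
  · have := h.T_RR (m + 1) (l + 1)
    rw [e1, e0] at this
    exact this.symm
  · ext q
    constructor
    · rintro ⟨q', h1, h2⟩
      cases h2
      rw [← e0]
      exact (h.acc_iff _ q [] (fun _ => rfl)).2 ⟨_, h1⟩
    · intro hq
      exact ⟨S.top, h.rr_mono (by omega) (hk0 q hq), rfl⟩
  · have := h.toW hg 0 m
    rwa [Nat.zero_add, e0] at this
  · have := h.T_RR 0 (m + 1)
    rw [Nat.zero_add, e0] at this
    exact this.symm

/-- A flat factorization is obtained by cutting off factors one at a time. -/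
theorem FlatSeq.exists_of_step (μ : ℕ) (Inv : Stream' B → Prop) (α : Stream' B) (hα : Inv α)
    (step : ∀ α, Inv α → ∃ w R α', Inv α' ∧ w ≠ [] ∧ S.FW μ w R ∧ α = w ++ₛ α') :
    ∃ σ w R, S.FlatSeq μ σ w R ∧ σ 0 = α ∧ ∀ n, Inv (σ n) := by
  have : Nonempty (Stream' B) := ⟨α⟩
  choose! w R f h1 h2 h3 h4 using step
  have hI : ∀ n, Inv (f^[n] α) := by
    intro n
    induction n with
    | zero => exact hα
    | succ n ih => rw [Function.iterate_succ_apply']; exact h1 _ ih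
  refine ⟨fun n => f^[n] α, fun n => w (f^[n] α), fun n => R (f^[n] α),
    ⟨fun n => h2 _ (hI n), fun n => h3 _ (hI n), fun n => ?_⟩, rfl, hI⟩
  simp only [Function.iterate_succ_apply']
  exact h4 _ (hI n)

variable (S)

/-- No well-matched prefix of `α` is followed by a return, that is, a call placed in front of `α`
stays unmatched. -/
def NoRet (α : Stream' B) : Prop :=
  ∀ w R b α', S.FW 2 w R → α = w ++ₛ (Stream'.cons b α') → S.kind b ≠ .ret

/-- An infinite word starts with a nonempty well-matched word, with a return, or with a call that is
never matched. -/
theorem cases_stream (α : Stream' B) :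
    (∃ w R α', w ≠ [] ∧ S.FW 0 w R ∧ S.FW 2 w R ∧ S.FW 1 w R ∧ α = w ++ₛ α') ∨
    (∃ b α', S.kind b = .ret ∧ α = [b] ++ₛ α') ∨
    (∃ b α', S.kind b = .call ∧ S.NoRet α' ∧ α = [b] ++ₛ α') := by
  obtain ⟨b, α, rfl⟩ : ∃ b α', α = Stream'.cons b α' := ⟨_, _, (Stream'.eta α).symm⟩
  rcases hk : S.kind b with _ | _ | _
  · by_cases hn : S.NoRet α
    · exact Or.inr (Or.inr ⟨b, α, hk, hn, rfl⟩)
    · simp only [NoRet, not_forall, not_not] at hn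
      obtain ⟨w, R, b', α', h1, h2, h3⟩ := hn
      refine Or.inl ⟨b :: (w ++ [b']), _, α', by simp, .blk 0 b w R b' (by simp) hk h3 h1,
        .blk 2 b w R b' (by simp) hk h3 h1, .blk 1 b w R b' (by simp) hk h3 h1, ?_⟩
      rw [h2, Stream'.cons_append_stream, Stream'.append_append_stream]; rfl
  · exact Or.inr (Or.inl ⟨b, α, hk, rfl⟩)
  · exact Or.inl ⟨[b], _, α, by simp, .loc 0 b (by simp) hk, .loc 2 b (by simp) hk,
      .loc 1 b (by simp) hk, rfl⟩

theorem NoRet.append {α : Stream' B} {w : List B} {R : Q → Q → Prop} (hw : S.FW 2 w R)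
    (h : S.NoRet (w ++ₛ α)) : S.NoRet α := by
  intro w' R' b α' h1 h2
  refine h (w ++ w') _ b α' (.concat _ _ _ _ _ hw h1) ?_
  rw [h2, Stream'.append_append_stream]

/-- After an unmatched call, the word factors into well-matched words and unmatched calls. -/
theorem seq_one (α : Stream' B) (h : S.NoRet α) : ∃ σ w R, S.FlatSeq 1 σ w R ∧ σ 0 = α := by
  obtain ⟨σ, w, R, h1, h2, _⟩ := FlatSeq.exists_of_step (S := S) 1 S.NoRet α h (by
    intro α hα
    rcases S.cases_stream α with ⟨w, R, α', h1, _, h2, h3, rfl⟩ | ⟨b, α', hk, rfl⟩ |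
      ⟨b, α', hk, hn, rfl⟩
    · exact ⟨w, R, α', NoRet.append S h2 hα, h1, h3, rfl⟩
    · exact absurd hk (hα [] Eq b α' .nil rfl)
    · exact ⟨[b], _, α', hn, by simp, .call b hk, rfl⟩)
  exact ⟨σ, w, R, h1, h2⟩

/-- Every infinite word has a flat factorization in mode 0 (the stack is empty infinitely often), or a
flat factorization in mode 1 after an optional prefix that is flat in mode 0 (from the first
unmatched call on). -/
theorem seq_cases (β : Stream' B) : (∃ σ w R, S.FlatSeq 0 σ w R ∧ σ 0 = β) ∨
    ∃ σ w R, S.FlatSeq 1 σ w R ∧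
      (β = σ 0 ∨ ∃ w₀ R₀, S.FW 0 w₀ R₀ ∧ β = w₀ ++ₛ σ 0) := by
  let Inv : Stream' B → Prop := fun α => α = β ∨ ∃ w₀ R₀, S.FW 0 w₀ R₀ ∧ β = w₀ ++ₛ α
  by_cases hstuck : ∃ b α', Inv (Stream'.cons b α') ∧ S.kind b = .call ∧ S.NoRet α'
  · right
    obtain ⟨b, α', hI, hk, hn⟩ := hstuck
    obtain ⟨σ, w, R, hs, h0⟩ := S.seq_one α' hn
    let σ' : ℕ → Stream' B := fun n => Nat.casesOn n (Stream'.cons b α') σ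
    let w' : ℕ → List B := fun n => Nat.casesOn n [b] w
    let R' : ℕ → Q → Q → Prop := fun n => Nat.casesOn n (S.push b) R
    refine ⟨σ', w', R', ⟨?_, ?_, ?_⟩, ?_⟩
    · rintro (_ | n)
      · simp [w']
      · exact hs.ne n
    · rintro (_ | n)
      · exact .call b hk
      · exact hs.fw n
    · rintro (_ | n)
      · change Stream'.cons b α' = [b] ++ₛ σ 0
        rw [h0]; rfl
      · exact hs.eq n
    · rcases hI with h | h
      · exact Or.inl h.symm
      · exact Or.inr h
  · left
    obtain ⟨σ, w, R, h1, h2, _⟩ := FlatSeq.exists_of_step (S := S) 0 Inv β (Or.inl rfl) (by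
      intro α hα
      have ext : ∀ w R α', S.FW 0 w R → α = w ++ₛ α' → Inv α' := by
        rintro w R α' hw rfl
        rcases hα with h | ⟨w₀, R₀, h1, h2⟩
        · exact Or.inr ⟨w, R, hw, h.symm⟩
        · exact Or.inr ⟨w₀ ++ w, _, .concat _ _ _ _ _ h1 hw, by
            rw [h2, Stream'.append_append_stream]⟩
      rcases S.cases_stream α with ⟨w, R, α', h1, h2, _, _, h3⟩ | ⟨b, α', hk, h3⟩ |
        ⟨b, α', hk, hn, rfl⟩
      · exact ⟨w, R, α', ext _ _ _ h2 h3, h1, h2, h3⟩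
      · exact ⟨[b], _, α', ext _ _ _ (.ret b hk) h3, by simp, .ret b hk, h3⟩
      · exact absurd ⟨b, α', hα, hk, hn⟩ hstuck)
    exact ⟨σ, w, R, h1, h2⟩

/-- The lasso criterion: there is a loop, reached by a prefix in the mode of the loop and possibly one
more prefix in mode 0, such that `ι` accepts the resulting word. It only mentions summaries. -/
def Crit (ι : Q) : Prop :=
  ∃ μ < 2, ∃ t R₁, S.Loop μ t ∧ S.W μ R₁ t ∧
    (ι ∈ pre R₁ t ∨ ∃ R₀, S.W 0 R₀ (pre R₁ t) ∧ ι ∈ pre R₀ (pre R₁ t))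

/-- The word built from a lasso is ultimately periodic. -/
theorem Crit.sound {ι : Q} (h : S.Crit ι) : ∃ β, S.AllGood β ∧ ι ∈ S.T β := by
  obtain ⟨μ, hμ, t, R₁, ⟨R, hW, e1, e2⟩, hW1, hι⟩ := h
  obtain ⟨V, hV, gV⟩ := hW.sound S
  obtain ⟨U, hU, gU⟩ := hW1.sound S
  have hV0 : V ≠ [] := hV.ne_nil S (by omega)
  have hs : S.FlatSeq μ (fun _ => Stream'.cycle V hV0) (fun _ => V) (fun _ => R) :=
    ⟨fun _ => hV0, fun _ => hV, fun _ => Stream'.cycle_eq V hV0⟩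
  have hT : S.T (Stream'.cycle V hV0) = t := by
    have hk : ∀ k n, pre (RR (fun _ => R) n (k + 1)) {S.top} = t := by
      intro k
      induction k with
      | zero =>
        intro n
        rw [RR, pre_comp]
        have : pre (RR (fun _ => R) (n + 1) 0) {S.top} = {S.top} := by ext q; simp [pre, RR]
        rw [this, e2]
      | succ k ih => intro n; rw [RR, pre_comp, ih, e1]
    ext q
    refine (hs.acc_iff 0 q [] (fun _ => rfl)).trans ⟨?_, fun hq => ⟨1, ?_⟩⟩
    · rintro ⟨k, h⟩
      rw [← hk k 0]
      exact ⟨_, hs.rr_succ h, rfl⟩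
    · rw [← hk 0 0] at hq
      obtain ⟨q', h1, rfl⟩ := hq
      exact h1
  have hH : S.HH μ (Stream'.cycle V hV0) t := hT ▸ hs.hh 0
  have hgV : S.AllGood (Stream'.cycle V hV0) := S.allGood_cycle V hV0 (gV _ hH)
  have hH1 := hH.append S (hU.flat S)
  have hgU : S.AllGood (U ++ₛ Stream'.cycle V hV0) := (S.allGood_append _ _).2 ⟨gU _ hH, hgV⟩
  rcases hι with hι | ⟨R₀, hW0, hι⟩
  · exact ⟨_, hgU, hH1.eq ▸ hι⟩
  · obtain ⟨U₀, hU0, gU0⟩ := hW0.sound S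
    have hH1' := hH1.zero S 0 (by simp)
    refine ⟨U₀ ++ₛ _, (S.allGood_append _ _).2 ⟨gU0 _ hH1', hgU⟩, ?_⟩
    rw [(hH1'.append S (hU0.flat S)).eq]; exact hι

/-- With finitely many states, the lasso criterion decides whether some infinite word is good at every
position and accepted from `ι`. -/
theorem crit_iff [Finite Q] (ι : Q) : S.Crit ι ↔ ∃ β, S.AllGood β ∧ ι ∈ S.T β := by
  refine ⟨Crit.sound S, ?_⟩
  rintro ⟨β, hg, hι⟩
  have goodseq : ∀ {μ σ w R}, S.FlatSeq μ σ w R → S.AllGood (σ 0) → ∀ n, S.AllGood (σ n) := by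
    intro μ σ w R h h0 n
    induction n with
    | zero => exact h0
    | succ n ih => rw [h.eq, allGood_append] at ih; exact ih.2
  rcases S.seq_cases β with ⟨σ, w, R, h, rfl⟩ | ⟨σ, w, R, h, rfl | ⟨w₀, R₀, h0, rfl⟩⟩
  · obtain ⟨t, R₁, h1, h2, h3⟩ := h.loop (goodseq h hg)
    exact ⟨0, by simp, t, R₁, h1, h2, Or.inl (h3 ▸ hι)⟩
  · obtain ⟨t, R₁, h1, h2, h3⟩ := h.loop (goodseq h hg)
    exact ⟨1, by simp, t, R₁, h1, h2, Or.inl (h3 ▸ hι)⟩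
  · rw [allGood_append] at hg
    obtain ⟨t, R₁, h1, h2, h3⟩ := h.loop (goodseq h hg.2)
    have hz := HH.zeroT S (σ 0)
    refine ⟨1, by simp, t, R₁, h1, h2, Or.inr ⟨R₀, ?_, ?_⟩⟩
    · rw [h3]; exact h0.toW S _ _ hz hg.1
    · rw [h3, ← (hz.append S (h0.flat S)).eq]; exact hι

end Sys

namespace VCode

/-! ### Codes of formulas and the labelling system -/

/-- The outermost operator of the formula with code `m`, as the number used in `VLDL.code`. -/
def tag (m : ℕ) : ℕ := m.unpair.1

/-- The code of the arguments of the outermost operator. -/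
def body (m : ℕ) : ℕ := m.unpair.2

/-- The type whose elements `VPAData.codeP` encodes: numbers of states and stack symbols, tables of
call, return, empty-stack return and local transitions, initial states, final states. -/
abbrev Tab : Type := ℕ × ℕ × List (List (List (List Bool))) × List (List (List (List Bool))) ×
  List (List (List Bool)) × List (List (List Bool)) × List Bool × List Bool

/-- The guard automaton of the formula with code `m`; the default values here and below concern only
numbers that do not encode formulas with a guard. -/
def mdata (m : ℕ) : Tab :=
  (Encodable.decode (α := Tab) (body m).unpair.1).getD (0, 0, [], [], [], [], [], [])

/-- The codes of the tests of the guard of `m`. -/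
def tests (m : ℕ) : List ℕ :=
  (Encodable.decode (α := List ℕ) (body m).unpair.2.unpair.1).getD []

/-- The code of the test at state `s` of the guard of `m`. -/
def tst (m s : ℕ) : ℕ := (tests m).getD s 0

/-- The code of the formula `φ` when `m` is the code of `⟨A⟩φ` or `[A]φ`. -/
def sub (m : ℕ) : ℕ := (body m).unpair.2.unpair.2

/-- Call transitions of the guard of `m`, on the letter with bitmask `i`. -/
def cD (m s i s' g : ℕ) : Bool :=
  ((((mdata m).2.2.1.getD s []).getD i []).getD s' []).getD g false

/-- Return transitions of the guard of `m` on a nonempty stack. -/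
def rD (m s i g s' : ℕ) : Bool :=
  ((((mdata m).2.2.2.1.getD s []).getD i []).getD g []).getD s' false

/-- Return transitions of the guard of `m` on the empty stack. -/
def eD (m s i s' : ℕ) : Bool :=
  (((mdata m).2.2.2.2.1.getD s []).getD i []).getD s' false

/-- Local transitions of the guard of `m`. -/
def lD (m s i s' : ℕ) : Bool :=
  (((mdata m).2.2.2.2.2.1.getD s []).getD i []).getD s' false

/-- Initial states of the guard of `m`. -/
def st (m s : ℕ) : Bool := (mdata m).2.2.2.2.2.2.1.getD s false

/-- Final states of the guard of `m`. -/
def fi (m s : ℕ) : Bool := (mdata m).2.2.2.2.2.2.2.getD s false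

/-- The kind of the letter with bitmask `i`, read off the code `kc` of the partition. -/
def kd (kc i : ℕ) : ℕ := ((Encodable.decode (α := List ℕ) kc).getD []).getD i 0

/-- The label `l`, a bitmask of claimed truth values indexed by formula codes, contains `m'`. The
bound `m' < m` makes every reference from a formula to another one descend in the code, so that
labels can be defined by recursion even at numbers that encode no formula. -/
def has (l m m' : ℕ) : Prop := m' < m ∧ l.testBit m' = true

/-- States `q ≥ 2` of the system stand for pairs (formula code, state of its guard) via
`q = Nat.pair m s + 2`; this is the formula code. -/
def cm (q : ℕ) : ℕ := (q - 2).unpair.1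

/-- The guard state represented by `q ≥ 2`. -/
def cs (q : ℕ) : ℕ := (q - 2).unpair.2

/-- The state `q` is a guard state whose test is claimed true by the label `l`. -/
def live (l q : ℕ) : Prop := 2 ≤ q ∧ has l (cm q) (tst (cm q) (cs q))

/-- The states that may move to `0`, the absorbing state, on a letter labelled `l`: state `0` itself,
state `1` if the label contains the formula `N` under consideration, and live final states of
guards at positions where the formula behind the guard is claimed true for `⟨A⟩φ` and false for
`[A]φ`. -/
def acc (N l q : ℕ) : Prop :=
  q = 0 ∨ (q = 1 ∧ l.testBit N = true) ∨
    (live l q ∧ fi (cm q) (cs q) = true ∧ (tag (cm q) = 4 ↔ has l (cm q) (sub (cm q))))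

/-- The move from `q` to `q'` stays within one guard, and the test at `q` is passed. -/
def nxt (l q q' : ℕ) : Prop := live l q ∧ 2 ≤ q' ∧ cm q' = cm q

/-- Call transitions of the system on the letter `i` with label `l`; `nret`, `nret0` and `nloc` are the
analogues for returns, returns on the empty stack and local actions. -/
def ncall (N i l q q' g : ℕ) : Prop :=
  (q' = 0 ∧ g = 0 ∧ acc N l q) ∨ (nxt l q q' ∧ cD (cm q) (cs q) i (cs q') g = true)

def nret (N i l q g q' : ℕ) : Prop :=
  (q' = 0 ∧ acc N l q) ∨ (nxt l q q' ∧ rD (cm q) (cs q) i g (cs q') = true)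

def nret0 (N i l q q' : ℕ) : Prop :=
  (q' = 0 ∧ acc N l q) ∨ (nxt l q q' ∧ eD (cm q) (cs q) i (cs q') = true)

def nloc (N i l q q' : ℕ) : Prop :=
  (q' = 0 ∧ acc N l q) ∨ (nxt l q q' ∧ lD (cm q) (cs q) i (cs q') = true)

/-- The truth value of the formula with code `m` at a letter `i` with label `l`, computed from the label
and from the set `P` of states accepting the remaining word. A guarded formula `⟨A⟩φ` is true iff
some initial guard state accepts, and `[A]φ` is true iff none does (there, accepting means to find a
run that ends where `φ` fails). -/
def gval (N i l : ℕ) (P : ℕ → Prop) (m : ℕ) : Prop :=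
  (tag m = 0 ∧ i.testBit (body m) = true) ∨
  (tag m = 1 ∧ ¬ has l m (body m)) ∨
  (tag m = 2 ∧ has l m (body m).unpair.1 ∧ has l m (body m).unpair.2) ∨
  (tag m = 3 ∧ (has l m (body m).unpair.1 ∨ has l m (body m).unpair.2)) ∨
  (4 ≤ tag m ∧ (tag m = 4 ↔ ∃ s < N + 1, st m s = true ∧ P (Nat.pair m s + 2)))

/-- The number of states, which is also used as the number of stack symbols. -/
def K (N : ℕ) : ℕ := Nat.pair N N + 3

def kindN (k : ℕ) : SymKind := if k = 0 then .call else if k = 1 then .ret else .loc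

theorem acc_zero (N l : ℕ) : acc N l 0 := Or.inl rfl

/-- The system that simulates the guards of all formulas with code at most `N` over words whose letters
`b` carry a label `b.2`. A letter is good if its label agrees with the truth values computed from
the label and the set of accepting states. -/
def sysOf (p kc N : ℕ) :
    Sys (Fin (2 ^ p) × Fin (2 ^ (N + 1))) (Fin (K N)) (Fin (K N)) where
  kind b := kindN (kd kc b.1)
  call b q q' g := ncall N b.1 b.2 q q' g
  ret b q g q' := nret N b.1 b.2 q g q'
  ret0 b q q' := nret0 N b.1 b.2 q q'
  loc b q q' := nloc N b.1 b.2 q q'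
  top := ⟨0, by unfold K; omega⟩
  good b t := ∀ m < N + 1, ((b.2 : ℕ).testBit m = true ↔
    gval N b.1 b.2 (fun q => ∃ h : q < K N, (⟨q, h⟩ : Fin (K N)) ∈ t) m)
  top_call _ := ⟨⟨0, by unfold K; omega⟩, Or.inl ⟨rfl, rfl, acc_zero _ _⟩⟩
  top_ret _ _ := Or.inl ⟨rfl, acc_zero _ _⟩
  top_ret0 _ := Or.inl ⟨rfl, acc_zero _ _⟩
  top_loc _ := Or.inl ⟨rfl, acc_zero _ _⟩

theorem has_congr {l l' m m0 x : ℕ} (h : ∀ j < m, l.testBit j = l'.testBit j) (hm : m0 ≤ m) :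
    has l m0 x ↔ has l' m0 x := by
  unfold has
  constructor <;> rintro ⟨h1, h2⟩ <;> refine ⟨h1, ?_⟩
  · rw [← h x (by omega)]; exact h2
  · rw [h x (by omega)]; exact h2

theorem live_congr {l l' m q : ℕ} (h : ∀ j < m, l.testBit j = l'.testBit j) (hm : cm q ≤ m) :
    live l q ↔ live l' q := by
  unfold live; rw [has_congr h hm]

theorem acc_congr {N l l' m q : ℕ} (h : ∀ j < m, l.testBit j = l'.testBit j)
    (hq : q = 0 ∨ (2 ≤ q ∧ cm q ≤ m)) : acc N l q ↔ acc N l' q := by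
  rcases hq with rfl | ⟨h2, h3⟩
  · simp [acc]
  · unfold acc
    rw [live_congr h h3, has_congr h h3]
    have : q ≠ 1 := by omega
    simp [this]

theorem gval_congr {N i l l' m : ℕ} {P P' : ℕ → Prop} (h : ∀ j < m, l.testBit j = l'.testBit j)
    (hP : ∀ s < N + 1, (P (Nat.pair m s + 2) ↔ P' (Nat.pair m s + 2))) :
    gval N i l P m ↔ gval N i l' P' m := by
  unfold gval
  rw [has_congr h le_rfl, has_congr h le_rfl, has_congr h le_rfl]
  have : (∃ s < N + 1, st m s = true ∧ P (Nat.pair m s + 2)) ↔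
      (∃ s < N + 1, st m s = true ∧ P' (Nat.pair m s + 2)) :=
    exists_congr fun s => and_congr_right fun hs => by rw [hP s hs]
  rw [this]

theorem cm_pair (m s : ℕ) : cm (Nat.pair m s + 2) = m := by simp [cm]

theorem cs_pair (m s : ℕ) : cs (Nat.pair m s + 2) = s := by simp [cs]

variable {p kc N : ℕ}

/-- Runs that start in a state of the guard of `m` stay in that guard until they are absorbed, and only
look at labels of formulas with code below `m`. -/
theorem step_congr {m : ℕ} {b b' : Fin (2 ^ p) × Fin (2 ^ (N + 1))} (hb : b.1 = b'.1)
    (h : ∀ j < m, (b.2 : ℕ).testBit j = (b'.2 : ℕ).testBit j)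
    {c d : Fin (K N) × List (Fin (K N))}
    (hq : (c.1 : ℕ) = 0 ∨ (2 ≤ (c.1 : ℕ) ∧ cm c.1 ≤ m))
    (hs : (sysOf p kc N).Step c b d) : (sysOf p kc N).Step c b' d ∧
      ((d.1 : ℕ) = 0 ∨ (2 ≤ (d.1 : ℕ) ∧ cm d.1 ≤ m)) := by
  have hacc := acc_congr (N := N) h hq
  have hnxt : nxt b.2 c.1 d.1 → nxt b'.2 c.1 d.1 ∧
      ((d.1 : ℕ) = 0 ∨ (2 ≤ (d.1 : ℕ) ∧ cm d.1 ≤ m)) := by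
    rintro ⟨h1, h2, h3⟩
    have hc : cm c.1 ≤ m := by
      have := h1.1
      omega
    exact ⟨⟨(live_congr h hc).1 h1, h2, h3⟩, Or.inr ⟨h2, by omega⟩⟩
  unfold Sys.Step at hs ⊢
  simp only [sysOf, ncall, nret, nret0, nloc] at hs ⊢
  rw [← hb]
  cases hk : kindN (kd kc b.1) <;> simp only [hk] at hs ⊢
  · obtain ⟨g, h1 | ⟨h1, h2⟩, h3⟩ := hs
    · exact ⟨⟨g, Or.inl ⟨h1.1, h1.2.1, hacc.1 h1.2.2⟩, h3⟩, Or.inl h1.1⟩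
    · exact ⟨⟨g, Or.inr ⟨(hnxt h1).1, h2⟩, h3⟩, (hnxt h1).2⟩
  · rcases hs with ⟨g, s, h0, h1 | ⟨h1, h2⟩, h3⟩ | ⟨h0, h1 | ⟨h1, h2⟩, h3⟩
    · exact ⟨Or.inl ⟨g, s, h0, Or.inl ⟨h1.1, hacc.1 h1.2⟩, h3⟩, Or.inl h1.1⟩
    · exact ⟨Or.inl ⟨g, s, h0, Or.inr ⟨(hnxt h1).1, h2⟩, h3⟩, (hnxt h1).2⟩
    · exact ⟨Or.inr ⟨h0, Or.inl ⟨h1.1, hacc.1 h1.2⟩, h3⟩, Or.inl h1.1⟩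
    · exact ⟨Or.inr ⟨h0, Or.inr ⟨(hnxt h1).1, h2⟩, h3⟩, (hnxt h1).2⟩
  · rcases hs with ⟨h1 | ⟨h1, h2⟩, h3⟩
    · exact ⟨⟨Or.inl ⟨h1.1, hacc.1 h1.2⟩, h3⟩, Or.inl h1.1⟩
    · exact ⟨⟨Or.inr ⟨(hnxt h1).1, h2⟩, h3⟩, (hnxt h1).2⟩

theorem accN_congr {m : ℕ} (n : ℕ) {β β' : Stream' (Fin (2 ^ p) × Fin (2 ^ (N + 1)))}
    (hb : ∀ k, (β.get k).1 = (β'.get k).1)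
    (h : ∀ k, ∀ j < m, ((β.get k).2 : ℕ).testBit j = ((β'.get k).2 : ℕ).testBit j)
    {c : Fin (K N) × List (Fin (K N))}
    (hq : (c.1 : ℕ) = 0 ∨ (2 ≤ (c.1 : ℕ) ∧ cm c.1 ≤ m))
    (hs : (sysOf p kc N).AccN n β c) : (sysOf p kc N).AccN n β' c := by
  induction n generalizing β β' c with
  | zero => exact hs
  | succ n ih =>
    obtain ⟨d, h1, h2⟩ := hs
    obtain ⟨h3, h4⟩ := step_congr (hb 0) (h 0) hq h1
    exact ⟨d, h3, ih (fun k => hb (k + 1)) (fun k => h (k + 1)) h4 h2⟩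

theorem acc_congr' {m : ℕ} {β β' : Stream' (Fin (2 ^ p) × Fin (2 ^ (N + 1)))}
    (hb : ∀ k, (β.get k).1 = (β'.get k).1)
    (h : ∀ k, ∀ j < m, ((β.get k).2 : ℕ).testBit j = ((β'.get k).2 : ℕ).testBit j)
    {c : Fin (K N) × List (Fin (K N))}
    (hq : (c.1 : ℕ) = 0 ∨ (2 ≤ (c.1 : ℕ) ∧ cm c.1 ≤ m)) :
    (sysOf p kc N).Acc β c ↔ (sysOf p kc N).Acc β' c := by
  constructor <;> rintro ⟨n, hn⟩
  · exact ⟨n, accN_congr n hb h hq hn⟩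
  · exact ⟨n, accN_congr n (fun k => (hb k).symm) (fun k j hj => (h k j hj).symm) hq hn⟩

open Classical in
/-- The bitmask of the predicate `F` restricted to `Fin n`. -/
noncomputable def mask (n : ℕ) (F : ℕ → Prop) : Fin (2 ^ n) :=
  ⟨Nat.ofBits (fun j : Fin n => decide (F j)), Nat.ofBits_lt_two_pow _⟩

theorem testBit_mask {n : ℕ} {F : ℕ → Prop} {j : ℕ} :
    ((mask n F : Fin (2 ^ n)) : ℕ).testBit j = true ↔ j < n ∧ F j := by
  by_cases h : j < n
  · simp [mask, Nat.testBit_ofBits_lt, h]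
  · simp [mask, h, Nat.testBit_ofBits_ge _ _ (Nat.le_of_not_lt h)]

theorem allGood_iff {B Q G : Type} (S : Sys B Q G) (β : Stream' B) :
    S.AllGood β ↔ ∀ k, S.good (β.get k) (S.T (β.drop k)) := by
  have key : ∀ n (β : Stream' B), S.GoodN n β ↔ ∀ k < n, S.good (β.get k) (S.T (β.drop k)) := by
    intro n
    induction n with
    | zero => intro β; simp [Sys.GoodN]
    | succ n ih =>
      intro β
      simp only [Sys.GoodN, ih]
      constructor
      · rintro ⟨h1, h2⟩ k hk
        cases k with
        | zero => exact h1
        | succ k =>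
          exact h2 k (by omega)
      · intro h
        refine ⟨h 0 (by omega), fun k hk => ?_⟩
        exact h (k + 1) (by omega)
  constructor
  · intro h k; exact (key (k + 1) β).1 (h _) k (by omega)
  · intro h n; exact (key n β).2 fun k _ => h k

/-- Every word has a labelling that is good everywhere: the label of formula `m` is determined, at all
positions simultaneously, by the labels of formulas with smaller code. -/
theorem label_exists (a : ℕ → Fin (2 ^ p)) : ∃ β : Stream' (Fin (2 ^ p) × Fin (2 ^ (N + 1))),
    (∀ k, (β.get k).1 = a k) ∧ (sysOf p kc N).AllGood β := by
  classical
  let str : (ℕ → ℕ → Prop) → Stream' (Fin (2 ^ p) × Fin (2 ^ (N + 1))) :=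
    fun F k => (a k, mask (N + 1) (fun m => F m k))
  let gv : (ℕ → ℕ → Prop) → ℕ → ℕ → Prop := fun F m k =>
    gval N (a k) (mask (N + 1) (fun m => F m k))
      (fun q => ∃ h : q < K N, (⟨q, h⟩ : Fin (K N)) ∈ (sysOf p kc N).T ((str F).drop k)) m
  -- The computed truth value of `m` depends only on the labels of smaller codes, at all positions.
  have cong : ∀ F F' m, (∀ j < m, ∀ k, F j k ↔ F' j k) → ∀ k, gv F m k ↔ gv F' m k := by
    intro F F' m hF k
    have hbit : ∀ k, ∀ j < m, ((mask (N + 1) (fun m => F m k) : Fin _) : ℕ).testBit j =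
        ((mask (N + 1) (fun m => F' m k) : Fin _) : ℕ).testBit j := by
      intro k j hj
      rw [Bool.eq_iff_iff, testBit_mask, testBit_mask, hF j hj k]
    refine gval_congr (hbit k) fun s hs => exists_congr fun h => ?_
    change (sysOf p kc N).Acc ((str F).drop k) (⟨Nat.pair m s + 2, h⟩, []) ↔
      (sysOf p kc N).Acc ((str F').drop k) (⟨Nat.pair m s + 2, h⟩, [])
    refine acc_congr' (p := p) (kc := kc) (m := m) (β := (str F).drop k) (β' := (str F').drop k)
      (c := (⟨Nat.pair m s + 2, h⟩, [])) (fun k' => ?_) (fun k' j hj => ?_)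
      (Or.inr ⟨Nat.le_add_left 2 _, (cm_pair m s).le⟩)
    · rfl
    rw [Stream'.get_drop, Stream'.get_drop]
    exact hbit _ j hj
  have main : ∀ m, ∃ F : ℕ → ℕ → Prop, ∀ j < m, ∀ k, F j k ↔ gv F j k := by
    intro m
    induction m with
    | zero => exact ⟨fun _ _ => True, by omega⟩
    | succ m ih =>
      obtain ⟨F, hF⟩ := ih
      let F' : ℕ → ℕ → Prop := fun j k => if j < m then F j k else gv F j k
      have hFF : ∀ j < m, ∀ k, F j k ↔ F' j k := by
        intro j hj k; simp [F', hj]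
      refine ⟨F', fun j hj k => ?_⟩
      rw [← cong F F' j (fun i hi => hFF i (by omega))]
      by_cases h : j < m
      · rw [← hFF j h, hF j h]
      · simp [F', h]
  obtain ⟨F, hF⟩ := main (N + 1)
  refine ⟨str F, fun k => rfl, (allGood_iff _ _).2 fun k m hm => ?_⟩
  refine Iff.trans ?_ (hF m hm k)
  change ((mask (N + 1) (fun m => F m k) : Fin _) : ℕ).testBit m = true ↔ _
  rw [testBit_mask]
  simp [hm]

/-! ### Decoding the guards -/

theorem le_encode_of_mem {x : ℕ} {l : List ℕ} (h : x ∈ l) : x ≤ Encodable.encode l := by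
  induction l with
  | nil => simp at h
  | cons y l ih =>
    rw [Encodable.encode_list_cons]
    rcases List.mem_cons.1 h with rfl | h
    · have := Nat.left_le_pair x (Encodable.encode l)
      simpa using this.trans (Nat.le_succ _)
    · exact (ih h).trans ((Nat.right_le_pair _ _).trans (Nat.le_succ _))

theorem lt_pair_right {a b : ℕ} (h : 1 ≤ a) : b < Nat.pair a b := by
  unfold Nat.pair; split <;> nlinarith

theorem getD_ofFn {X : Type} {n : ℕ} (f : Fin n → X) (i : ℕ) (d : X) :
    (List.ofFn f).getD i d = if h : i < n then f ⟨i, h⟩ else d := by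
  rw [List.getD_eq_getElem?_getD, List.getElem?_ofFn]
  split <;> simp

section Codes

variable {n m : ℕ} (M : VPAData (Fin p → Bool) n m)
  (t : Fin n → VLDL (Fin p) (Fin p → Bool)) (φ : VLDL (Fin p) (Fin p → Bool))

/-- The code of `⟨A⟩φ` for `c = 4` and of `[A]φ` for `c = 5`, where `A` is `M` with tests `t`. -/
def guardCode (c : ℕ) : ℕ := Nat.pair c (Nat.pair M.codeP
  (Nat.pair (Encodable.encode (List.ofFn (fun q => (t q).code))) φ.code))

theorem tag_guardCode (c : ℕ) : tag (guardCode M t φ c) = c := by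
  simp [tag, guardCode]

theorem sub_guardCode (c : ℕ) : sub (guardCode M t φ c) = φ.code := by
  simp [sub, body, guardCode]

theorem tst_guardCode (c : ℕ) (s : Fin n) : tst (guardCode M t φ c) s = (t s).code := by
  simp [tst, tests, body, guardCode]

theorem sub_lt {c : ℕ} (hc : 1 ≤ c) : φ.code < guardCode M t φ c :=
  lt_of_le_of_lt ((Nat.right_le_pair _ _).trans (Nat.right_le_pair _ _)) (lt_pair_right hc)

theorem tst_lt {c : ℕ} (hc : 1 ≤ c) (s : Fin n) : (t s).code < guardCode M t φ c :=
  lt_of_le_of_lt ((le_encode_of_mem (l := List.ofFn fun q => (t q).code)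
    ((List.mem_ofFn' _ _).2 ⟨s, rfl⟩)).trans
    ((Nat.left_le_pair _ _).trans (Nat.right_le_pair _ _))) (lt_pair_right hc)

theorem n_le_codeP : n ≤ M.codeP := by
  simp only [VPAData.codeP, Encodable.encode_prod_val, Encodable.encode_nat]
  exact Nat.left_le_pair _ _

theorem m_le_codeP : m ≤ M.codeP := by
  simp only [VPAData.codeP, Encodable.encode_prod_val, Encodable.encode_nat]
  exact (Nat.left_le_pair _ _).trans (Nat.right_le_pair _ _)

theorem codeP_le (c : ℕ) : M.codeP ≤ guardCode M t φ c :=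
  (Nat.left_le_pair _ _).trans (Nat.right_le_pair _ _)

theorem mdata_guardCode (c : ℕ) : mdata (guardCode M t φ c) =
    (n, m,
      List.ofFn (fun q : Fin n => List.ofFn (fun i : Fin (2 ^ p) =>
        List.ofFn (fun q' : Fin n => List.ofFn (fun g : Fin m =>
          M.callΔ q (letterOf p i.val) q' g)))),
      List.ofFn (fun q : Fin n => List.ofFn (fun i : Fin (2 ^ p) =>
        List.ofFn (fun g : Fin m => List.ofFn (fun q' : Fin n =>
          M.retΔ q (letterOf p i.val) (some g) q')))),
      List.ofFn (fun q : Fin n => List.ofFn (fun i : Fin (2 ^ p) =>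
        List.ofFn (fun q' : Fin n => M.retΔ q (letterOf p i.val) none q'))),
      List.ofFn (fun q : Fin n => List.ofFn (fun i : Fin (2 ^ p) =>
        List.ofFn (fun q' : Fin n => M.locΔ q (letterOf p i.val) q'))),
      List.ofFn (fun q : Fin n => M.start q),
      List.ofFn (fun q : Fin n => M.final q)) := by
  simp only [mdata, body, guardCode, Nat.unpair_pair, VPAData.codeP]
  rw [Encodable.encodek]
  rfl

theorem cD_guardCode (c s s' g : ℕ) (i : Fin (2 ^ p)) :
    cD (guardCode M t φ c) s i s' g = true ↔ ∃ (hs : s < n) (hs' : s' < n) (hg : g < m),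
      M.callΔ ⟨s, hs⟩ (letterOf p i) ⟨s', hs'⟩ ⟨g, hg⟩ = true := by
  simp only [cD, mdata_guardCode, getD_ofFn]
  by_cases h1 : s < n <;> by_cases h2 : s' < n <;> by_cases h3 : g < m <;>
    simp [h1, h2, h3]

theorem rD_guardCode (c s s' g : ℕ) (i : Fin (2 ^ p)) :
    rD (guardCode M t φ c) s i g s' = true ↔ ∃ (hs : s < n) (hs' : s' < n) (hg : g < m),
      M.retΔ ⟨s, hs⟩ (letterOf p i) (some ⟨g, hg⟩) ⟨s', hs'⟩ = true := by
  simp only [rD, mdata_guardCode, getD_ofFn]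
  by_cases h1 : s < n <;> by_cases h2 : s' < n <;> by_cases h3 : g < m <;>
    simp [h1, h2, h3]

theorem eD_guardCode (c s s' : ℕ) (i : Fin (2 ^ p)) :
    eD (guardCode M t φ c) s i s' = true ↔ ∃ (hs : s < n) (hs' : s' < n),
      M.retΔ ⟨s, hs⟩ (letterOf p i) none ⟨s', hs'⟩ = true := by
  simp only [eD, mdata_guardCode, getD_ofFn]
  by_cases h1 : s < n <;> by_cases h2 : s' < n <;> simp [h1, h2]

theorem lD_guardCode (c s s' : ℕ) (i : Fin (2 ^ p)) :
    lD (guardCode M t φ c) s i s' = true ↔ ∃ (hs : s < n) (hs' : s' < n),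
      M.locΔ ⟨s, hs⟩ (letterOf p i) ⟨s', hs'⟩ = true := by
  simp only [lD, mdata_guardCode, getD_ofFn]
  by_cases h1 : s < n <;> by_cases h2 : s' < n <;> simp [h1, h2]

theorem st_guardCode (c s : ℕ) :
    st (guardCode M t φ c) s = true ↔ ∃ hs : s < n, M.start ⟨s, hs⟩ = true := by
  simp only [st, mdata_guardCode, getD_ofFn]
  by_cases h1 : s < n <;> simp [h1]

theorem fi_guardCode (c : ℕ) (s : Fin n) :
    fi (guardCode M t φ c) s = M.final s := by
  simp [fi, mdata_guardCode]

end Codes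

theorem kind_sysOf (kind : (Fin p → Bool) → SymKind) (b : Fin (2 ^ p) × Fin (2 ^ (N + 1))) :
    (sysOf p (kindCode p kind) N).kind b = kind (letterOf p b.1) := by
  simp only [sysOf, kd, kindCode, Encodable.encodek, Option.getD_some, getD_ofFn, b.1.2, dif_pos]
  cases kind (letterOf p b.1) <;> simp [symCode, kindN]

/-- The guard automaton, started at position `k` in configuration `c`, has an accepting run
of exactly `j` steps that passes all tests and ends at a position satisfying `P`. -/
def GN {A : Type} {n m : ℕ} (M : VPAData A n m) (kind : A → SymKind) (α : ℕ → A)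
    (τ : Fin n → ℕ → Prop) (P : ℕ → Prop) : ℕ → ℕ → Fin n × List (Fin m) → Prop
  | 0, k, c => τ c.1 k ∧ M.final c.1 = true ∧ P k
  | j + 1, k, c => τ c.1 k ∧ ∃ d, M.step kind c (α k) d ∧ GN M kind α τ P j (k + 1) d

theorem GN_iff {A : Type} {n m : ℕ} (M : VPAData A n m) (kind : A → SymKind) (α : ℕ → A)
    (τ : Fin n → ℕ → Prop) (P : ℕ → Prop) (j k : ℕ) (c : Fin n × List (Fin m)) :
    GN M kind α τ P j k c ↔ ∃ ρ : ℕ → Fin n × List (Fin m), ρ k = c ∧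
      (∀ i, k ≤ i → i < k + j → M.step kind (ρ i) (α i) (ρ (i + 1))) ∧
      M.final (ρ (k + j)).1 = true ∧ (∀ i, k ≤ i → i ≤ k + j → τ (ρ i).1 i) ∧ P (k + j) := by
  induction j generalizing k c with
  | zero =>
    constructor
    · rintro ⟨h1, h2, h3⟩
      refine ⟨fun _ => c, rfl, fun i _ _ => by omega, h2, fun i _ _ => ?_, h3⟩
      obtain rfl : i = k := by omega
      exact h1
    · rintro ⟨ρ, rfl, _, h2, h3, h4⟩
      exact ⟨h3 k le_rfl le_rfl, h2, h4⟩
  | succ j ih =>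
    have e : k + (j + 1) = k + 1 + j := by omega
    simp only [GN, ih, e]
    constructor
    · rintro ⟨h0, d, h1, ρ, rfl, h2, h3, h4, h5⟩
      refine ⟨fun i => if i = k then c else ρ i, if_pos rfl, fun i hi hj => ?_, ?_,
        fun i hi hj => ?_, h5⟩
      · by_cases hik : i = k
        · subst hik; simpa using h1
        · have : i + 1 ≠ k := by omega
          simpa [hik, this] using h2 i (by omega) hj
      · have : k + 1 + j ≠ k := by omega
        simpa [this] using h3
      · by_cases hik : i = k
        · subst hik; simpa using h0
        · simpa [hik] using h4 i (by omega) hj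
    · rintro ⟨ρ, rfl, h2, h3, h4, h5⟩
      exact ⟨h4 k le_rfl (by omega), ρ (k + 1), h2 k le_rfl (by omega), ρ, rfl,
        fun i hi hj => h2 i (by omega) hj, h3, fun i hi hj => h4 i (by omega) hj, h5⟩

/-- The existence of a guard run in the semantics of VLDL, with the test and end conditions left
abstract, is reachability in the sense of `GN`. -/
theorem run_iff_GN {A : Type} {n m : ℕ} (M : VPAData A n m) (kind : A → SymKind) (α : ℕ → A)
    (τ : Fin n → ℕ → Prop) (P : ℕ → Prop) (k : ℕ) :
    (∃ l, k ≤ l ∧ (∃ ρ : ℕ → Fin n × List (Fin m),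
        M.start (ρ k).1 = true ∧ (ρ k).2 = [] ∧
        (∀ i, k ≤ i → i < l → M.step kind (ρ i) (α i) (ρ (i + 1))) ∧
        M.final (ρ l).1 = true ∧ (∀ i, k ≤ i → i ≤ l → τ (ρ i).1 i)) ∧ P l) ↔
    ∃ s, M.start s = true ∧ ∃ j, GN M kind α τ P j k (s, []) := by
  simp only [GN_iff]
  constructor
  · rintro ⟨l, hl, ⟨ρ, h1, h2, h3, h4, h5⟩, h6⟩
    obtain ⟨j, rfl⟩ := Nat.exists_eq_add_of_le hl
    exact ⟨_, h1, j, ρ, Prod.ext rfl h2, h3, h4, h5, h6⟩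
  · rintro ⟨s, h1, j, ρ, h2, h3, h4, h5, h6⟩
    exact ⟨k + j, by omega, ⟨ρ, by rw [h2]; exact h1, by rw [h2], h3, h4, h5⟩, h6⟩

/-! ### Correct labellings express satisfaction -/

theorem pair_mono {a b c d : ℕ} (h1 : a ≤ c) (h2 : b ≤ d) : Nat.pair a b ≤ Nat.pair c d := by
  have e1 : Nat.pair a b ≤ Nat.pair c b := by
    rcases h1.eq_or_lt with rfl | h
    · exact le_rfl
    · exact (Nat.pair_lt_pair_left b h).le
  have e2 : Nat.pair c b ≤ Nat.pair c d := by
    rcases h2.eq_or_lt with rfl | h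
    · exact le_rfl
    · exact (Nat.pair_lt_pair_right c h).le
  exact e1.trans e2

theorem state_lt {m s : ℕ} (hm : m ≤ N) (hs : s ≤ N) : Nat.pair m s + 2 < K N := by
  have := pair_mono hm hs
  unfold K; omega

theorem symb_lt {g : ℕ} (h : g ≤ N) : g < K N := by
  have := Nat.left_le_pair N N
  unfold K; omega

section Guard

variable {n m : ℕ} (M : VPAData (Fin p → Bool) n m)
  (t : Fin n → VLDL (Fin p) (Fin p → Bool)) (φ : VLDL (Fin p) (Fin p → Bool))
  (kind : (Fin p → Bool) → SymKind) (c : ℕ) (hN : guardCode M t φ c ≤ N)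

/-- Embedding of the configurations of the guard `M` into those of the system. -/
def emb (d : Fin n × List (Fin m)) : Fin (K N) × List (Fin (K N)) :=
  (⟨Nat.pair (guardCode M t φ c) d.1 + 2, state_lt hN
    (d.1.2.le.trans ((n_le_codeP M).trans ((codeP_le M t φ c).trans hN)))⟩,
   d.2.map fun g : Fin m => ⟨g, symb_lt
    (g.2.le.trans ((m_le_codeP M).trans ((codeP_le M t φ c).trans hN)))⟩)

theorem cm_emb (d : Fin n × List (Fin m)) : cm (emb M t φ c hN d).1 = guardCode M t φ c := by
  simp [emb, cm_pair]

theorem cs_emb (d : Fin n × List (Fin m)) : cs (emb M t φ c hN d).1 = d.1 := by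
  simp [emb, cs_pair]

theorem two_le_emb (d : Fin n × List (Fin m)) : 2 ≤ ((emb M t φ c hN d).1 : ℕ) := by
  simp [emb]

theorem eq_emb {q : Fin (K N)} (h2 : 2 ≤ (q : ℕ)) (h : cm q = guardCode M t φ c)
    (hs : cs q < n) (s : List (Fin m)) : q = (emb M t φ c hN (⟨cs q, hs⟩, s)).1 := by
  apply Fin.ext
  simp only [emb, ← h, cm, cs, Nat.pair_unpair]
  omega

variable {c} (hc : 1 ≤ c)
include hc hN

theorem live_emb (l : ℕ) (d : Fin n × List (Fin m)) :
    live l (emb M t φ c hN d).1 ↔ l.testBit (t d.1).code = true := by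
  simp only [live, has, cm_emb, cs_emb, tst_guardCode, two_le_emb, tst_lt M t φ hc, true_and]

theorem acc_emb (l : ℕ) (d : Fin n × List (Fin m)) :
    acc N l (emb M t φ c hN d).1 ↔ l.testBit (t d.1).code = true ∧ M.final d.1 = true ∧
      (c = 4 ↔ l.testBit φ.code = true) := by
  have h2 := two_le_emb M t φ c hN d
  have h0 : ((emb M t φ c hN d).1 : ℕ) ≠ 0 := by omega
  have h1 : ((emb M t φ c hN d).1 : ℕ) ≠ 1 := by omega
  simp only [acc, live_emb M t φ hN hc, cm_emb, cs_emb, fi_guardCode, tag_guardCode, has,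
    sub_guardCode, sub_lt M t φ hc, h0, h1, true_and, false_and, false_or]

omit hc hN in
/-- States satisfying `acc` move to `top` in one step, whatever the kind of the letter. -/
theorem top_of_acc {b : Fin (2 ^ p) × Fin (2 ^ (N + 1))} {kc : ℕ}
    (e : Fin (K N) × List (Fin (K N))) (h : acc N b.2 e.1) :
    ∃ d, d.1 = (sysOf p kc N).top ∧ (sysOf p kc N).Step e b d := by
  have h0 : 0 < K N := by unfold K; omega
  obtain ⟨q, s⟩ := e
  unfold Sys.Step
  simp only [sysOf, ncall, nret, nret0, nloc]
  cases kindN (kd kc b.1) <;> simp only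
  · exact ⟨(⟨0, h0⟩, ⟨0, h0⟩ :: s), rfl, ⟨0, h0⟩, Or.inl ⟨rfl, rfl, h⟩, rfl⟩
  · cases s with
    | nil => exact ⟨(⟨0, h0⟩, []), rfl, Or.inr ⟨rfl, Or.inl ⟨rfl, h⟩, rfl⟩⟩
    | cons g s => exact ⟨(⟨0, h0⟩, s), rfl, Or.inl ⟨g, s, rfl, Or.inl ⟨rfl, h⟩, rfl⟩⟩
  · exact ⟨(⟨0, h0⟩, s), rfl, Or.inl ⟨rfl, h⟩, rfl⟩

theorem step_emb_of {b : Fin (2 ^ p) × Fin (2 ^ (N + 1))} {d d' : Fin n × List (Fin m)}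
    (h : (b.2 : ℕ).testBit (t d.1).code = true) (hs : M.step kind d (letterOf p b.1) d') :
    (sysOf p (kindCode p kind) N).Step (emb M t φ c hN d) b (emb M t φ c hN d') := by
  have hn : nxt b.2 (emb M t φ c hN d).1 (emb M t φ c hN d').1 :=
    ⟨(live_emb M t φ hN hc _ _).2 h, two_le_emb _ _ _ _ _ _, by rw [cm_emb, cm_emb]⟩
  unfold Sys.Step
  rw [kind_sysOf]
  simp only [VPAData.step, vstep] at hs
  simp only [sysOf, ncall, nret, nret0, nloc, cm_emb, cs_emb]
  cases hk : kind (letterOf p b.1) <;> simp only [hk] at hs ⊢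
  · obtain ⟨g, h1, h2⟩ := hs
    refine ⟨⟨g, symb_lt (g.2.le.trans ((m_le_codeP M).trans ((codeP_le M t φ c).trans hN)))⟩,
      Or.inr ⟨hn, ?_⟩, by simp [emb, h2]⟩
    rw [cD_guardCode]
    exact ⟨d.1.2, d'.1.2, g.2, h1⟩
  · rcases hs with ⟨g, s, h1, h2, h3⟩ | ⟨h1, h2, h3⟩
    · refine Or.inl ⟨⟨g, symb_lt (g.2.le.trans
        ((m_le_codeP M).trans ((codeP_le M t φ c).trans hN)))⟩, (emb M t φ c hN d').2,
        by simp [emb, h1, h3], Or.inr ⟨hn, ?_⟩, rfl⟩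
      rw [rD_guardCode]
      exact ⟨d.1.2, d'.1.2, g.2, h2⟩
    · refine Or.inr ⟨by simp [emb, h1], Or.inr ⟨hn, ?_⟩, by simp [emb, h3]⟩
      rw [eD_guardCode]
      exact ⟨d.1.2, d'.1.2, h2⟩
  · refine ⟨Or.inr ⟨hn, ?_⟩, by simp [emb, hs.2]⟩
    rw [lD_guardCode]
    exact ⟨d.1.2, d'.1.2, hs.1⟩

/-- A step of the system from a guard configuration either leaves the guard, accepting, or is a step of
the guard at a position where the test of the current state is claimed true. -/
theorem step_emb_inv {b : Fin (2 ^ p) × Fin (2 ^ (N + 1))} {d : Fin n × List (Fin m)}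
    {e : Fin (K N) × List (Fin (K N))}
    (hs : (sysOf p (kindCode p kind) N).Step (emb M t φ c hN d) b e) :
    acc N b.2 (emb M t φ c hN d).1 ∨ ((b.2 : ℕ).testBit (t d.1).code = true ∧
      ∃ d', e = emb M t φ c hN d' ∧ M.step kind d (letterOf p b.1) d') := by
  have hn : nxt b.2 (emb M t φ c hN d).1 e.1 → (b.2 : ℕ).testBit (t d.1).code = true ∧
      2 ≤ (e.1 : ℕ) ∧ cm e.1 = guardCode M t φ c := by
    rintro ⟨h1, h2, h3⟩
    exact ⟨(live_emb M t φ hN hc _ _).1 h1, h2, by rw [h3, cm_emb]⟩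
  unfold Sys.Step at hs
  rw [kind_sysOf] at hs
  simp only [sysOf, ncall, nret, nret0, nloc, cm_emb, cs_emb] at hs
  simp only [VPAData.step, vstep]
  cases hk : kind (letterOf p b.1) <;> simp only [hk] at hs ⊢
  · obtain ⟨g, h1 | ⟨h1, h2⟩, h3⟩ := hs
    · exact Or.inl h1.2.2
    · obtain ⟨h4, h5, h6⟩ := hn h1
      rw [cD_guardCode] at h2
      obtain ⟨hs, hs', hg, h2⟩ := h2
      refine Or.inr ⟨h4, (⟨_, hs'⟩, ⟨_, hg⟩ :: d.2), Prod.ext ?_ ?_, ⟨_, hg⟩, h2, rfl⟩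
      · exact eq_emb M t φ c hN h5 h6 hs' _
      · rw [h3]; simp [emb]
  · rcases hs with ⟨g, s, h0, h1 | ⟨h1, h2⟩, h3⟩ | ⟨h0, h1 | ⟨h1, h2⟩, h3⟩
    · exact Or.inl h1.2
    · obtain ⟨h4, h5, h6⟩ := hn h1
      rw [rD_guardCode] at h2
      obtain ⟨hs, hs', hg, h2⟩ := h2
      obtain ⟨dq, ds⟩ := d
      cases ds with
      | nil => simp [emb] at h0
      | cons g' ds =>
        simp only [emb, List.map_cons, List.cons.injEq] at h0
        have hgv := congrArg Fin.val h0.1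
        have hgg : g' = ⟨g, hg⟩ := Fin.ext hgv
        refine Or.inr ⟨h4, (⟨_, hs'⟩, ds), Prod.ext ?_ ?_, Or.inl ⟨g', ds, rfl, ?_, rfl⟩⟩
        · exact eq_emb M t φ c hN h5 h6 hs' _
        · rw [h3]; exact h0.2.symm
        · rw [hgg]; exact h2
    · exact Or.inl h1.2
    · obtain ⟨h4, h5, h6⟩ := hn h1
      rw [eD_guardCode] at h2
      obtain ⟨hs, hs', h2⟩ := h2
      refine Or.inr ⟨h4, (⟨_, hs'⟩, []), Prod.ext ?_ ?_, Or.inr ⟨?_, h2, rfl⟩⟩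
      · exact eq_emb M t φ c hN h5 h6 hs' _
      · rw [h3]; simp [emb]
      · simpa [emb] using h0
  · rcases hs with ⟨h1 | ⟨h1, h2⟩, h3⟩
    · exact Or.inl h1.2
    · obtain ⟨h4, h5, h6⟩ := hn h1
      rw [lD_guardCode] at h2
      obtain ⟨hs, hs', h2⟩ := h2
      refine Or.inr ⟨h4, (⟨_, hs'⟩, d.2), Prod.ext ?_ ?_, h2, rfl⟩
      · exact eq_emb M t φ c hN h5 h6 hs' _
      · rw [h3]; rfl

variable {β : Stream' (Fin (2 ^ p) × Fin (2 ^ (N + 1)))}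

theorem acc_of_GN {j k : ℕ} {d : Fin n × List (Fin m)}
    (h : GN M kind (fun k => letterOf p (β.get k).1)
      (fun s k => ((β.get k).2 : ℕ).testBit (t s).code = true)
      (fun k => c = 4 ↔ ((β.get k).2 : ℕ).testBit φ.code = true) j k d) :
    (sysOf p (kindCode p kind) N).Acc (β.drop k) (emb M t φ c hN d) := by
  induction j generalizing k d with
  | zero =>
    obtain ⟨e, h1, h2⟩ := top_of_acc (kc := kindCode p kind) (b := β.get k)
      (emb M t φ c hN d) ((acc_emb M t φ hN hc _ _).2 h)
    refine ⟨1, e, ?_, h1⟩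
    rw [Stream'.head_drop]; exact h2
  | succ j ih =>
    obtain ⟨h1, d', h2, h3⟩ := h
    obtain ⟨i, hi⟩ := ih h3
    refine ⟨i + 1, _, ?_, by rw [Stream'.tail_drop']; exact hi⟩
    rw [Stream'.head_drop]
    exact step_emb_of M t φ kind hN hc h1 h2

theorem GN_of_accN {i k : ℕ} {d : Fin n × List (Fin m)}
    (h : (sysOf p (kindCode p kind) N).AccN i (β.drop k) (emb M t φ c hN d)) :
    ∃ j, GN M kind (fun k => letterOf p (β.get k).1)
      (fun s k => ((β.get k).2 : ℕ).testBit (t s).code = true)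
      (fun k => c = 4 ↔ ((β.get k).2 : ℕ).testBit φ.code = true) j k d := by
  induction i generalizing k d with
  | zero =>
    have h1 := two_le_emb M t φ c hN d
    have h2 : ((emb M t φ c hN d).1 : ℕ) = 0 := congrArg Fin.val h
    omega
  | succ i ih =>
    obtain ⟨e, h1, h2⟩ := h
    rw [Stream'.head_drop] at h1
    rw [Stream'.tail_drop'] at h2
    rcases step_emb_inv M t φ kind hN hc h1 with h3 | ⟨h3, d', rfl, h4⟩
    · exact ⟨0, (acc_emb M t φ hN hc _ _).1 h3⟩
    · obtain ⟨j, hj⟩ := ih (k := k + 1) h2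
      exact ⟨j + 1, h3, d', h4, hj⟩

/-- An initial state of the guard accepts the remaining word iff the guard has an accepting run that
passes its tests, all as claimed by the labels, to a position where `φ` is claimed true (for
`c = 4`) or claimed not to hold (otherwise). -/
theorem guard_iff (k : ℕ) :
    (∃ s < N + 1, st (guardCode M t φ c) s = true ∧
      ∃ h : Nat.pair (guardCode M t φ c) s + 2 < K N, (⟨_, h⟩ : Fin (K N)) ∈
        (sysOf p (kindCode p kind) N).T (β.drop k)) ↔
    (∃ l, k ≤ l ∧ (∃ ρ : ℕ → Fin n × List (Fin m),
        M.start (ρ k).1 = true ∧ (ρ k).2 = [] ∧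
        (∀ i, k ≤ i → i < l → M.step kind (ρ i) (letterOf p (β.get i).1) (ρ (i + 1))) ∧
        M.final (ρ l).1 = true ∧
        (∀ i, k ≤ i → i ≤ l → ((β.get i).2 : ℕ).testBit (t (ρ i).1).code = true)) ∧
      (c = 4 ↔ ((β.get l).2 : ℕ).testBit φ.code = true)) := by
  refine Iff.trans ?_ (run_iff_GN M kind (fun k => letterOf p (β.get k).1)
      (fun s k => ((β.get k).2 : ℕ).testBit (t s).code = true)
      (fun k => c = 4 ↔ ((β.get k).2 : ℕ).testBit φ.code = true) k).symm
  constructor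
  · rintro ⟨s, _, h1, h2, i, h3⟩
    rw [st_guardCode] at h1
    obtain ⟨hs, h1⟩ := h1
    exact ⟨⟨s, hs⟩, h1, GN_of_accN M t φ kind hN hc (i := i) (d := (⟨s, hs⟩, [])) h3⟩
  · rintro ⟨s, h1, j, h2⟩
    have hsN : (s : ℕ) ≤ N :=
      s.2.le.trans ((n_le_codeP M).trans ((codeP_le M t φ c).trans hN))
    refine ⟨s, by omega, (st_guardCode _ _ _ _ _).2 ⟨s.2, h1⟩, state_lt hN hsN, ?_⟩
    exact acc_of_GN M t φ kind hN hc h2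

end Guard

/-- Labels that are good at all positions are the truth values of the formulas. -/
theorem sat_iff (kind : (Fin p → Bool) → SymKind)
    (β : Stream' (Fin (2 ^ p) × Fin (2 ^ (N + 1))))
    (hβ : (sysOf p (kindCode p kind) N).AllGood β) (φ : VLDL (Fin p) (Fin p → Bool))
    (hN : φ.code ≤ N) (k : ℕ) : ((β.get k).2 : ℕ).testBit φ.code = true ↔
      VLDL.sat (fun v a => a v = true) kind φ (fun k => letterOf p (β.get k).1) k := by
  have good : ∀ k, ∀ m < N + 1, _ := fun k => (allGood_iff _ _).1 hβ k
  induction φ generalizing k with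
  | atom v =>
    rw [good k _ (by omega)]
    simp [gval, VLDL.code, VLDL.sat, tag, body, letterOf]
  | neg φ ih =>
    have hlt : φ.code < (VLDL.neg φ).code := lt_pair_right le_rfl
    rw [good k _ (by omega)]
    have : body (VLDL.neg φ).code = φ.code := by simp [VLDL.code, body]
    have ht : tag (VLDL.neg φ).code = 1 := by simp [VLDL.code, tag]
    have ih' := ih (by omega) k
    refine Iff.trans ?_ (not_congr ih')
    simp [gval, has, ht, this, hlt]
  | and φ ψ ih1 ih2 =>
    have hlt : φ.code < (VLDL.and φ ψ).code :=
      lt_of_le_of_lt (Nat.left_le_pair _ _) (lt_pair_right (by omega))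
    have hlt' : ψ.code < (VLDL.and φ ψ).code :=
      lt_of_le_of_lt (Nat.right_le_pair _ _) (lt_pair_right (by omega))
    rw [good k _ (by omega)]
    have : body (VLDL.and φ ψ).code = Nat.pair φ.code ψ.code := by simp [VLDL.code, body]
    have ht : tag (VLDL.and φ ψ).code = 2 := by simp [VLDL.code, tag]
    have ih1' := ih1 (by omega) k
    have ih2' := ih2 (by omega) k
    refine Iff.trans ?_ (and_congr ih1' ih2')
    simp [gval, has, ht, this, hlt, hlt']
  | or φ ψ ih1 ih2 =>
    have hlt : φ.code < (VLDL.or φ ψ).code :=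
      lt_of_le_of_lt (Nat.left_le_pair _ _) (lt_pair_right (by omega))
    have hlt' : ψ.code < (VLDL.or φ ψ).code :=
      lt_of_le_of_lt (Nat.right_le_pair _ _) (lt_pair_right (by omega))
    rw [good k _ (by omega)]
    have : body (VLDL.or φ ψ).code = Nat.pair φ.code ψ.code := by simp [VLDL.code, body]
    have ht : tag (VLDL.or φ ψ).code = 3 := by simp [VLDL.code, tag]
    have ih1' := ih1 (by omega) k
    have ih2' := ih2 (by omega) k
    refine Iff.trans ?_ (or_congr ih1' ih2')
    simp [gval, has, ht, this, hlt, hlt']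
  | dia n m M t φ ih1 ih2 =>
    have hg : (VLDL.dia n m M t φ).code = guardCode M t φ 4 := rfl
    have hlt := sub_lt M t φ (c := 4) (by omega)
    have hlt' := tst_lt M t φ (c := 4) (by omega)
    rw [hg] at hN ⊢
    rw [good k _ (by omega)]
    have e := guard_iff M t φ kind hN (by omega) (β := β) k
    have ih1' : ∀ s k, ((β.get k).2 : ℕ).testBit (t s).code = true ↔ _ :=
      fun s k => ih1 s ((hlt' s).le.trans hN) k
    have ih2' : ∀ k, ((β.get k).2 : ℕ).testBit φ.code = true ↔ _ :=
      fun k => ih2 (hlt.le.trans hN) k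
    simp only [ih1', ih2', true_iff] at e
    rw [VLDL.sat, ← e]
    simp [gval, tag_guardCode]
  | box n m M t φ ih1 ih2 =>
    have hg : (VLDL.box n m M t φ).code = guardCode M t φ 5 := rfl
    have hlt := sub_lt M t φ (c := 5) (by omega)
    have hlt' := tst_lt M t φ (c := 5) (by omega)
    rw [hg] at hN ⊢
    rw [good k _ (by omega)]
    have e := guard_iff M t φ kind hN (by omega) (β := β) k
    have ih1' : ∀ s k, ((β.get k).2 : ℕ).testBit (t s).code = true ↔ _ :=
      fun s k => ih1 s ((hlt' s).le.trans hN) k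
    have ih2' : ∀ k, ((β.get k).2 : ℕ).testBit φ.code = true ↔ _ :=
      fun k => ih2 (hlt.le.trans hN) k
    have h54 : ¬ (5 = 4) := by omega
    simp only [ih1', ih2', h54, false_iff] at e
    rw [VLDL.sat]
    refine Iff.trans ?_ ((not_iff_not.2 e).trans (by push Not; rfl))
    simp [gval, tag_guardCode]

theorem letterOf_surj (a : Fin p → Bool) : ∃ i : Fin (2 ^ p), letterOf p i = a :=
  ⟨⟨Nat.ofBits a, Nat.ofBits_lt_two_pow _⟩, by
    funext j; simp [letterOf, Nat.testBit_ofBits_lt]⟩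

theorem one_lt_K : 1 < K N := by unfold K; omega

/-- State `1` accepts a word iff the label of its first letter contains `N`. -/
theorem iota_iff (β : Stream' (Fin (2 ^ p) × Fin (2 ^ (N + 1)))) :
    (⟨1, one_lt_K⟩ : Fin (K N)) ∈ (sysOf p kc N).T β ↔ ((β.get 0).2 : ℕ).testBit N = true := by
  constructor
  · rintro ⟨n, h⟩
    have key : ∀ d, (sysOf p kc N).Step (⟨1, one_lt_K⟩, []) (β.get 0) d →
        ((β.get 0).2 : ℕ).testBit N = true := by
      intro d hd
      have hn : ∀ l q', ¬ nxt l 1 q' := by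
        rintro l q' ⟨⟨h, _⟩, _⟩; omega
      have ha : ∀ l, acc N l 1 → l.testBit N = true := by
        rintro l (h | h | ⟨⟨h, _⟩, _⟩)
        · omega
        · exact h.2
        · omega
      unfold Sys.Step at hd
      simp only [sysOf, ncall, nret, nret0, nloc, hn, false_and, or_false] at hd
      cases hk : kindN (kd kc (β.get 0).1) <;> simp only [hk] at hd
      · obtain ⟨g, h1, _⟩ := hd
        exact ha _ h1.2.2
      · rcases hd with ⟨g, s, _, h1, _⟩ | ⟨_, h1, _⟩ <;> exact ha _ h1.2
      · exact ha _ hd.1.2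
    cases n with
    | zero => exact absurd (congrArg Fin.val h) (by simp [sysOf])
    | succ n =>
      obtain ⟨d, h1, _⟩ := h
      exact key d h1
  · intro h
    obtain ⟨d, h1, h2⟩ := top_of_acc (kc := kc) (b := β.get 0) (⟨1, one_lt_K⟩, [])
      (Or.inr (Or.inl ⟨rfl, h⟩))
    exact ⟨1, d, h2, h1⟩

/-- A formula is satisfiable iff the lasso criterion holds for the state `1` of its labelling system. -/
theorem sat_iff_crit (kind : (Fin p → Bool) → SymKind) (φ : VLDL (Fin p) (Fin p → Bool)) :
    (∃ α : ℕ → (Fin p → Bool), VLDL.sat (fun v a => a v = true) kind φ α 0) ↔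
      (sysOf p (kindCode p kind) φ.code).Crit ⟨1, one_lt_K⟩ := by
  rw [Sys.crit_iff]
  constructor
  · rintro ⟨α, hα⟩
    choose a ha using fun k => letterOf_surj (α k)
    obtain ⟨β, h1, h2⟩ := label_exists (kc := kindCode p kind) (N := φ.code) a
    refine ⟨β, h2, (iota_iff β).2 ((sat_iff kind β h2 φ le_rfl 0).2 ?_)⟩
    have : (fun k => letterOf p (β.get k).1) = α := by funext k; rw [h1, ha]
    rw [this]; exact hα
  · rintro ⟨β, h1, h2⟩
    exact ⟨_, (sat_iff kind β h1 φ le_rfl 0).1 ((iota_iff β).1 h2)⟩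

/-! ### The lasso criterion as bounded arithmetic -/

/-- Membership in a coded set. Sets of states are coded by bitmasks `t < 2 ^ k`, and binary relations
by bitmasks `r < 2 ^ Nat.pair k k` with the pair `(q, q')` at bit `Nat.pair q q'`. -/
def TB (t i : ℕ) : Prop := t.testBit i = true

/-- The set `u` is the preimage of `t` under `r`. -/
def isPre (k u r t : ℕ) : Prop :=
  ∀ q < k, (TB u q ↔ ∃ q' < k, TB r (Nat.pair q q') ∧ TB t q')

/-- The relation `r` is the composition of `r₁` and `r₂`. -/
def isComp (k r r₁ r₂ : ℕ) : Prop :=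
  ∀ q < k, ∀ q' < k, (TB r (Nat.pair q q') ↔
    ∃ e < k, TB r₁ (Nat.pair q e) ∧ TB r₂ (Nat.pair e q'))

/-- The relation `r` is equality. -/
def isEq (k r : ℕ) : Prop := ∀ q < k, ∀ q' < k, (TB r (Nat.pair q q') ↔ q = q')

/-- The relation `r` is that of the local action `i` with label `l`; similarly for `isRet0` (returns on
the empty stack), `isPush` (unmatched calls) and `isBlk` (matched pairs around `r₁`). -/
def isLoc (N i l r : ℕ) : Prop :=
  ∀ q < K N, ∀ q' < K N, (TB r (Nat.pair q q') ↔ nloc N i l q q')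

def isRet0 (N i l r : ℕ) : Prop :=
  ∀ q < K N, ∀ q' < K N, (TB r (Nat.pair q q') ↔ nret0 N i l q q')

def isPush (N i l r : ℕ) : Prop :=
  ∀ q < K N, ∀ q' < K N, (TB r (Nat.pair q q') ↔ ∃ g < K N, ncall N i l q q' g)

def isBlk (N i l r₁ i' l' r : ℕ) : Prop :=
  ∀ q < K N, ∀ q' < K N, (TB r (Nat.pair q q') ↔ ∃ g < K N, ∃ a < K N, ∃ a' < K N,
    ncall N i l q a g ∧ TB r₁ (Nat.pair a a') ∧ nret N i' l' a' g q')

/-- The letter `i` with label `l` is good when the accepting states are `t`. -/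
def goodN (N i l t : ℕ) : Prop :=
  ∀ m < N + 1, (TB l m ↔ gval N i l (fun q => q < K N ∧ TB t q) m)

/-- The letter `i` with label `l` is good when the accepting states are the preimage of `t` under `r`. -/
def preGood (N i l r t : ℕ) : Prop :=
  ∃ u < 2 ^ K N, isPre (K N) u r t ∧ goodN N i l u

/-- The code of a triple (mode, relation, set), at which `Sys.W` is evaluated. -/
def cod (μ r t : ℕ) : ℕ := Nat.pair μ (Nat.pair r t)

/-- Bound on the codes of relations. -/
def RB (N : ℕ) : ℕ := 2 ^ Nat.pair (K N) (K N)

/-- Bound on the codes of triples. -/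
def CB (N : ℕ) : ℕ := Nat.pair 3 (Nat.pair (RB N) (2 ^ K N))

/-- Closure of the coded set `S` of triples under the rule `Sys.W.loc` with conclusion `r`, `t`;
`clBlk`, `clRet`, `clCall` and `clConcat` are the analogues for the other rules. -/
def clLoc (p kc N S r t : ℕ) : Prop :=
  ∀ μ < 3, ∀ i < 2 ^ p, ∀ l < 2 ^ (N + 1), 2 ≤ kd kc i → isLoc N i l r → preGood N i l r t →
    TB S (cod μ r t)

def clBlk (p kc N S r t : ℕ) : Prop :=
  ∀ i < 2 ^ p, ∀ l < 2 ^ (N + 1), ∀ i' < 2 ^ p, ∀ l' < 2 ^ (N + 1),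
    kd kc i = 0 → kd kc i' = 1 → ∀ r₀ < RB N, ∀ r₁ < RB N, ∀ v < 2 ^ K N,
      isRet0 N i' l' r₀ → isPre (K N) v r₀ t → goodN N i' l' v → TB S (cod 2 r₁ v) →
      isBlk N i l r₁ i' l' r → preGood N i l r t → ∀ μ < 3, TB S (cod μ r t)

def clRet (p kc N S r t : ℕ) : Prop :=
  ∀ i < 2 ^ p, ∀ l < 2 ^ (N + 1), kd kc i = 1 → isRet0 N i l r → preGood N i l r t →
    TB S (cod 0 r t)

def clCall (p kc N S r t : ℕ) : Prop :=
  ∀ i < 2 ^ p, ∀ l < 2 ^ (N + 1), kd kc i = 0 → isPush N i l r → preGood N i l r t →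
    TB S (cod 1 r t)

def clConcat (N S r t : ℕ) : Prop :=
  ∀ r₁ < RB N, ∀ r₂ < RB N, ∀ v < 2 ^ K N, ∀ μ < 3, isComp (K N) r r₁ r₂ →
    isPre (K N) v r₂ t → TB S (cod μ r₁ v) → TB S (cod μ r₂ t) → TB S (cod μ r t)

/-- The coded set `S` of triples is closed under all rules of `Sys.W`. -/
def ClosedN (p kc N S : ℕ) : Prop :=
  ∀ r < RB N, ∀ t < 2 ^ K N, (isEq (K N) r → TB S (cod 2 r t)) ∧ clLoc p kc N S r t ∧
    clBlk p kc N S r t ∧ clRet p kc N S r t ∧ clCall p kc N S r t ∧ clConcat N S r t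

/-- The coded counterpart of `Sys.W`. The least fixed point is described as the intersection of all
closed sets of triples, each coded by a single number below a fixed bound; this avoids iterating an
operator. -/
def WN (p kc N μ r t : ℕ) : Prop :=
  ∀ S < 2 ^ CB N, ClosedN p kc N S → TB S (cod μ r t)

/-- The coded counterpart of `Sys.Loop`; the number `1` codes the singleton of the state `0`. -/
def LoopN (p kc N μ t : ℕ) : Prop :=
  ∃ r < RB N, WN p kc N μ r t ∧ isPre (K N) t r t ∧ isPre (K N) t r 1

/-- The coded counterpart of `Sys.Crit` for the state `1`. -/
def CritN (p kc N : ℕ) : Prop :=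
  ∃ μ < 2, ∃ t < 2 ^ K N, ∃ r₁ < RB N, LoopN p kc N μ t ∧ WN p kc N μ r₁ t ∧
    ∃ u < 2 ^ K N, isPre (K N) u r₁ t ∧ (TB u 1 ∨
      ∃ r₀ < RB N, WN p kc N 0 r₀ u ∧ ∃ v < 2 ^ K N, isPre (K N) v r₀ u ∧ TB v 1)

/-- The set of states coded by `t`. -/
def setOf (k t : ℕ) : Set (Fin k) := {q | TB t q}

/-- The relation coded by `r`. -/
def relOf (k r : ℕ) (q q' : Fin k) : Prop := TB r (Nat.pair q q')

theorem setOf_surj {k : ℕ} (T : Set (Fin k)) : ∃ t < 2 ^ k, setOf k t = T := by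
  refine ⟨mask k (fun j => ∃ h : j < k, (⟨j, h⟩ : Fin k) ∈ T), Fin.isLt _, ?_⟩
  ext q
  simp [setOf, TB, testBit_mask]

theorem pair_lt {a b k : ℕ} (h1 : a < k) (h2 : b < k) : Nat.pair a b < Nat.pair k k :=
  (Nat.pair_lt_pair_left b h1).trans_le (pair_mono le_rfl h2.le)

theorem relOf_surj {k : ℕ} (R : Fin k → Fin k → Prop) :
    ∃ r < 2 ^ Nat.pair k k, relOf k r = R := by
  refine ⟨mask (Nat.pair k k) (fun j => ∃ (h : j.unpair.1 < k) (h' : j.unpair.2 < k),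
    R ⟨_, h⟩ ⟨_, h'⟩), Fin.isLt _, ?_⟩
  funext q q'
  simp [relOf, TB, testBit_mask, pair_lt q.2 q'.2]

theorem isPre_iff {k u r t : ℕ} :
    isPre k u r t ↔ setOf k u = Sys.pre (relOf k r) (setOf k t) := by
  simp only [isPre, Set.ext_iff, setOf, Sys.pre, relOf, Set.mem_ofPred_eq]
  constructor
  · intro h q
    rw [h q q.2]
    constructor
    · rintro ⟨q', h1, h2⟩; exact ⟨⟨q', h1⟩, h2⟩
    · rintro ⟨q', h2⟩; exact ⟨q', q'.2, h2⟩
  · intro h q hq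
    rw [h ⟨q, hq⟩]
    constructor
    · rintro ⟨q', h2⟩; exact ⟨q', q'.2, h2⟩
    · rintro ⟨q', h1, h2⟩; exact ⟨⟨q', h1⟩, h2⟩

/-- Comparing a coded relation with a relation given by a formula on numbers. -/
theorem relOf_eq_iff {k r : ℕ} {R : Fin k → Fin k → Prop} {R' : ℕ → ℕ → Prop}
    (h : ∀ q q' : Fin k, R q q' ↔ R' q q') :
    (∀ q < k, ∀ q' < k, (TB r (Nat.pair q q') ↔ R' q q')) ↔ relOf k r = R := by
  constructor
  · intro h1; funext q q'
    exact propext ((h1 q q.2 q' q'.2).trans (h q q').symm)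
  · rintro rfl q hq q' hq'
    exact h ⟨q, hq⟩ ⟨q', hq'⟩

theorem isComp_iff {k r r₁ r₂ : ℕ} :
    isComp k r r₁ r₂ ↔ relOf k r = Relation.Comp (relOf k r₁) (relOf k r₂) := by
  refine relOf_eq_iff (R' := fun q q' => ∃ e < k, TB r₁ (Nat.pair q e) ∧ TB r₂ (Nat.pair e q'))
    fun q q' => ?_
  constructor
  · rintro ⟨e, h1, h2⟩; exact ⟨e, e.2, h1, h2⟩
  · rintro ⟨e, he, h1, h2⟩; exact ⟨⟨e, he⟩, h1, h2⟩

theorem isEq_iff {k r : ℕ} : isEq k r ↔ relOf k r = Eq :=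
  relOf_eq_iff (R' := fun q q' => q = q') fun _ _ => Fin.ext_iff

variable {i l i' l' r r₁ t μ : ℕ}

theorem isLoc_iff (hi : i < 2 ^ p) (hl : l < 2 ^ (N + 1)) :
    isLoc N i l r ↔ relOf (K N) r = (sysOf p kc N).loc (⟨i, hi⟩, ⟨l, hl⟩) :=
  relOf_eq_iff (R' := fun q q' => nloc N i l q q') fun _ _ => Iff.rfl

theorem isRet0_iff (hi : i < 2 ^ p) (hl : l < 2 ^ (N + 1)) :
    isRet0 N i l r ↔ relOf (K N) r = (sysOf p kc N).ret0 (⟨i, hi⟩, ⟨l, hl⟩) :=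
  relOf_eq_iff (R' := fun q q' => nret0 N i l q q') fun _ _ => Iff.rfl

theorem isPush_iff (hi : i < 2 ^ p) (hl : l < 2 ^ (N + 1)) :
    isPush N i l r ↔ relOf (K N) r = (sysOf p kc N).push (⟨i, hi⟩, ⟨l, hl⟩) := by
  refine relOf_eq_iff (R' := fun q q' => ∃ g < K N, ncall N i l q q' g) fun q q' => ?_
  constructor
  · rintro ⟨g, h⟩; exact ⟨g, g.2, h⟩
  · rintro ⟨g, hg, h⟩; exact ⟨⟨g, hg⟩, h⟩

theorem isBlk_iff (hi : i < 2 ^ p) (hl : l < 2 ^ (N + 1)) (hi' : i' < 2 ^ p)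
    (hl' : l' < 2 ^ (N + 1)) :
    isBlk N i l r₁ i' l' r ↔ relOf (K N) r = (sysOf p kc N).blk (⟨i, hi⟩, ⟨l, hl⟩)
      (relOf (K N) r₁) (⟨i', hi'⟩, ⟨l', hl'⟩) := by
  refine relOf_eq_iff (R' := fun q q' => ∃ g < K N, ∃ a < K N, ∃ a' < K N,
    ncall N i l q a g ∧ TB r₁ (Nat.pair a a') ∧ nret N i' l' a' g q') fun q q' => ?_
  constructor
  · rintro ⟨g, a, a', h⟩; exact ⟨g, g.2, a, a.2, a', a'.2, h⟩
  · rintro ⟨g, hg, a, ha, a', ha', h⟩; exact ⟨⟨g, hg⟩, ⟨a, ha⟩, ⟨a', ha'⟩, h⟩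

theorem goodN_iff (hi : i < 2 ^ p) (hl : l < 2 ^ (N + 1)) :
    goodN N i l t ↔ (sysOf p kc N).good (⟨i, hi⟩, ⟨l, hl⟩) (setOf (K N) t) := by
  have : (fun q => q < K N ∧ TB t q) =
      fun q => ∃ h : q < K N, (⟨q, h⟩ : Fin (K N)) ∈ setOf (K N) t := by
    funext q
    simp [setOf]
  unfold goodN
  rw [this]
  rfl

theorem preGood_iff (hi : i < 2 ^ p) (hl : l < 2 ^ (N + 1)) :
    preGood N i l r t ↔ (sysOf p kc N).good (⟨i, hi⟩, ⟨l, hl⟩)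
      (Sys.pre (relOf (K N) r) (setOf (K N) t)) := by
  constructor
  · rintro ⟨u, -, h1, h2⟩
    rw [goodN_iff (kc := kc) hi hl] at h2
    rwa [isPre_iff.1 h1] at h2
  · intro h
    obtain ⟨u, hu, e⟩ := setOf_surj (Sys.pre (relOf (K N) r) (setOf (K N) t))
    refine ⟨u, hu, isPre_iff.2 e, ?_⟩
    rw [goodN_iff (kc := kc) hi hl, e]
    exact h

theorem kind_loc_iff {b : Fin (2 ^ p) × Fin (2 ^ (N + 1))} :
    (sysOf p kc N).kind b = .loc ↔ 2 ≤ kd kc b.1 := by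
  simp only [sysOf, kindN]
  split_ifs <;> simp <;> omega

theorem kind_ret_iff {b : Fin (2 ^ p) × Fin (2 ^ (N + 1))} :
    (sysOf p kc N).kind b = .ret ↔ kd kc b.1 = 1 := by
  simp only [sysOf, kindN]
  split_ifs <;> simp <;> omega

theorem kind_call_iff {b : Fin (2 ^ p) × Fin (2 ^ (N + 1))} :
    (sysOf p kc N).kind b = .call ↔ kd kc b.1 = 0 := by
  simp only [sysOf, kindN]
  split_ifs <;> simp <;> omega

theorem W_lt {B Q G : Type} {S : Sys B Q G} {μ : ℕ} {R : Q → Q → Prop} {t : Set Q}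
    (h : S.W μ R t) : μ < 3 := by
  induction h <;> omega

/-- Induction on `Sys.W`: a closed set contains the codes of all summaries. -/
theorem mem_of_W {S μ : ℕ} (hS : ClosedN p kc N S) {R : Fin (K N) → Fin (K N) → Prop}
    {T : Set (Fin (K N))} (h : (sysOf p kc N).W μ R T) : ∀ r < RB N, ∀ t < 2 ^ K N,
      relOf (K N) r = R → setOf (K N) t = T → TB S (cod μ r t) := by
  induction h with
  | nil T => exact fun r hr t ht e1 e2 => (hS r hr t ht).1 (isEq_iff.2 e1)
  | loc μ b T hμ hk hg =>
    rintro r hr t ht e1 rfl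
    refine (hS r hr t ht).2.1 μ hμ b.1 b.1.2 b.2 b.2.2 (kind_loc_iff.1 hk)
      ((isLoc_iff b.1.2 b.2.2).2 e1) ((preGood_iff (kc := kc) b.1.2 b.2.2).2 ?_)
    rw [e1]; exact hg
  | blk μ b R b' T hμ hk hk' hg' _ hg ih =>
    rintro r hr t ht e1 rfl
    obtain ⟨r₀, hr₀, e3⟩ := relOf_surj ((sysOf p kc N).ret0 b')
    obtain ⟨r₁, hr₁, rfl⟩ := relOf_surj R
    obtain ⟨v, hv, e4⟩ := setOf_surj (Sys.pre ((sysOf p kc N).ret0 b') (setOf (K N) t))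
    refine (hS r hr t ht).2.2.1 b.1 b.1.2 b.2 b.2.2 b'.1 b'.1.2 b'.2 b'.2.2
      (kind_call_iff.1 hk) (kind_ret_iff.1 hk') r₀ hr₀ r₁ hr₁ v hv
      ((isRet0_iff b'.1.2 b'.2.2).2 e3) (isPre_iff.2 (by rw [e3, e4]))
      ((goodN_iff (kc := kc) b'.1.2 b'.2.2).2 (by rw [e4]; exact hg')) (ih r₁ hr₁ v hv rfl e4)
      ((isBlk_iff b.1.2 b.2.2 b'.1.2 b'.2.2).2 e1)
      ((preGood_iff (kc := kc) b.1.2 b.2.2).2 (by rw [e1]; exact hg)) μ hμ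
  | ret b T hk hg =>
    rintro r hr t ht e1 rfl
    refine (hS r hr t ht).2.2.2.1 b.1 b.1.2 b.2 b.2.2 (kind_ret_iff.1 hk)
      ((isRet0_iff b.1.2 b.2.2).2 e1) ((preGood_iff (kc := kc) b.1.2 b.2.2).2 ?_)
    rw [e1]; exact hg
  | call b T hk hg =>
    rintro r hr t ht e1 rfl
    refine (hS r hr t ht).2.2.2.2.1 b.1 b.1.2 b.2 b.2.2 (kind_call_iff.1 hk)
      ((isPush_iff b.1.2 b.2.2).2 e1) ((preGood_iff (kc := kc) b.1.2 b.2.2).2 ?_)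
    rw [e1]; exact hg
  | concat μ R R' T h1 h2 ih1 ih2 =>
    rintro r hr t ht e1 rfl
    obtain ⟨r₁, hr₁, rfl⟩ := relOf_surj R
    obtain ⟨r₂, hr₂, rfl⟩ := relOf_surj R'
    obtain ⟨v, hv, e4⟩ := setOf_surj (Sys.pre (relOf (K N) r₂) (setOf (K N) t))
    exact (hS r hr t ht).2.2.2.2.2 r₁ hr₁ r₂ hr₂ v hv μ (W_lt h1) (isComp_iff.2 e1)
      (isPre_iff.2 e4) (ih1 r₁ hr₁ v hv rfl e4) (ih2 r₂ hr₂ t ht rfl rfl)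

theorem cod_lt {μ r t a b : ℕ} (hμ : μ < 3) (hr : r < a) (ht : t < b) :
    cod μ r t < Nat.pair 3 (Nat.pair a b) :=
  (Nat.pair_lt_pair_left _ hμ).trans_le
    (pair_mono le_rfl (pair_mono hr.le ht.le))

/-- The set of codes of all summaries is itself closed, which gives the forward direction. -/
theorem WN_iff (hr : r < RB N) (ht : t < 2 ^ K N) :
    WN p kc N μ r t ↔ (sysOf p kc N).W μ (relOf (K N) r) (setOf (K N) t) := by
  constructor
  · intro h
    let S : Fin (2 ^ CB N) := mask (CB N) (fun c => (sysOf p kc N).W c.unpair.1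
      (relOf (K N) c.unpair.2.unpair.1) (setOf (K N) c.unpair.2.unpair.2))
    have key : ∀ μ r t, TB S (cod μ r t) ↔ cod μ r t < CB N ∧
        (sysOf p kc N).W μ (relOf (K N) r) (setOf (K N) t) := by
      intro μ r t
      simp [S, TB, testBit_mask, cod]
    refine ((key _ _ _).1 (h S S.2 ?_)).2
    intro r hr t ht
    refine ⟨?_, ?_, ?_, ?_, ?_, ?_⟩
    · intro h
      refine (key _ _ _).2 ⟨cod_lt (by omega) hr ht, ?_⟩
      rw [isEq_iff.1 h]; exact .nil _
    · intro μ hμ i hi l hl h1 h2 h3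
      refine (key _ _ _).2 ⟨cod_lt hμ hr ht, ?_⟩
      have h4 := (preGood_iff (kc := kc) hi hl).1 h3
      rw [(isLoc_iff (kc := kc) hi hl).1 h2] at h4 ⊢
      exact .loc μ _ _ hμ (kind_loc_iff.2 h1) h4
    · intro i hi l hl i' hi' l' hl' hk hk' r₀ hr₀ r₁ hr₁ v hv h1 h2 h3 h4 h5 h6 μ hμ
      refine (key _ _ _).2 ⟨cod_lt hμ hr ht, ?_⟩
      have h7 := (preGood_iff (kc := kc) hi hl).1 h6
      have h8 := (goodN_iff (kc := kc) hi' hl').1 h3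
      have h9 := ((key _ _ _).1 h4).2
      rw [(isBlk_iff (kc := kc) hi hl hi' hl').1 h5] at h7 ⊢
      have e := isPre_iff.1 h2
      rw [(isRet0_iff (kc := kc) hi' hl').1 h1] at e
      rw [e] at h8 h9
      exact .blk μ _ _ _ _ hμ (kind_call_iff.2 hk) (kind_ret_iff.2 hk') h8 h9 h7
    · intro i hi l hl h1 h2 h3
      refine (key _ _ _).2 ⟨cod_lt (by omega) hr ht, ?_⟩
      have h4 := (preGood_iff (kc := kc) hi hl).1 h3
      rw [(isRet0_iff (kc := kc) hi hl).1 h2] at h4 ⊢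
      exact .ret _ _ (kind_ret_iff.2 h1) h4
    · intro i hi l hl h1 h2 h3
      refine (key _ _ _).2 ⟨cod_lt (by omega) hr ht, ?_⟩
      have h4 := (preGood_iff (kc := kc) hi hl).1 h3
      rw [(isPush_iff (kc := kc) hi hl).1 h2] at h4 ⊢
      exact .call _ _ (kind_call_iff.2 h1) h4
    · intro r₁ hr₁ r₂ hr₂ v hv μ hμ h1 h2 h3 h4
      refine (key _ _ _).2 ⟨cod_lt hμ hr ht, ?_⟩
      have h5 := ((key _ _ _).1 h3).2
      have h6 := ((key _ _ _).1 h4).2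
      rw [isPre_iff.1 h2] at h5
      rw [isComp_iff.1 h1]
      exact .concat _ _ _ _ h5 h6
  · intro h S _ hS
    exact mem_of_W hS h r hr t ht rfl rfl

theorem setOf_one : setOf (K N) 1 = {(sysOf p kc N).top} := by
  ext q
  obtain ⟨q, hq⟩ := q
  cases q <;> simp [setOf, TB, sysOf, Nat.testBit_succ]

theorem LoopN_iff (ht : t < 2 ^ K N) :
    LoopN p kc N μ t ↔ (sysOf p kc N).Loop μ (setOf (K N) t) := by
  constructor
  · rintro ⟨r, hr, h1, h2, h3⟩
    rw [isPre_iff] at h2 h3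
    rw [setOf_one (p := p) (kc := kc)] at h3
    exact ⟨_, (WN_iff hr ht).1 h1, h2.symm, h3.symm⟩
  · rintro ⟨R, h1, h2, h3⟩
    obtain ⟨r, hr, rfl⟩ := relOf_surj R
    refine ⟨r, hr, (WN_iff hr ht).2 h1, isPre_iff.2 h2.symm, isPre_iff.2 ?_⟩
    rw [setOf_one (p := p) (kc := kc)]
    exact h3.symm

theorem critN_iff : CritN p kc N ↔ (sysOf p kc N).Crit ⟨1, one_lt_K⟩ := by
  constructor
  · rintro ⟨μ, hμ, t, ht, r₁, hr₁, h1, h2, u, hu, h3, h4⟩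
    rw [isPre_iff] at h3
    refine ⟨μ, hμ, _, _, (LoopN_iff ht).1 h1, (WN_iff hr₁ ht).1 h2, ?_⟩
    rw [← h3]
    refine h4.imp (fun h => h) ?_
    rintro ⟨r₀, hr₀, h5, v, hv, h6, h7⟩
    refine ⟨_, (WN_iff hr₀ hu).1 h5, ?_⟩
    rw [← isPre_iff.1 h6]
    exact h7
  · rintro ⟨μ, hμ, T, R₁, h1, h2, h3⟩
    obtain ⟨t, ht, rfl⟩ := setOf_surj T
    obtain ⟨r₁, hr₁, rfl⟩ := relOf_surj R₁
    obtain ⟨u, hu, e⟩ := setOf_surj (Sys.pre (relOf (K N) r₁) (setOf (K N) t))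
    refine ⟨μ, hμ, t, ht, r₁, hr₁, (LoopN_iff ht).2 h1,
      (WN_iff hr₁ ht).2 h2, u, hu, isPre_iff.2 e, ?_⟩
    rw [← e] at h3
    refine h3.imp (fun h => h) ?_
    rintro ⟨R₀, h5, h6⟩
    obtain ⟨r₀, hr₀, rfl⟩ := relOf_surj R₀
    obtain ⟨v, hv, e'⟩ := setOf_surj (Sys.pre (relOf (K N) r₀) (setOf (K N) u))
    refine ⟨r₀, hr₀, (WN_iff hr₀ hu).2 h5, v, hv, isPre_iff.2 e', ?_⟩
    rw [← e'] at h6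
    exact h6

/-! ### Primitive recursiveness -/

section Prim

variable {α β : Type} [Primcodable α] [Primcodable β]

/-- Primitive recursive predicates are closed under bounded quantification; with this, the lemmas below
follow the definitions symbol by symbol. -/
theorem all_lt {P : α → ℕ → Prop} {f : α → ℕ} (hf : Primrec f)
    (hP : PrimrecPred fun z : α × ℕ => P z.1 z.2) : PrimrecPred fun a => ∀ y < f a, P a y := by
  have h : PrimrecRel fun (y : ℕ) (a : α) => P a y := hP.comp (Primrec.pair Primrec.snd Primrec.fst)
  exact (h.forall_mem_list.comp (Primrec.list_range.comp hf) Primrec.id).of_eq (by simp)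

theorem ex_lt {P : α → ℕ → Prop} {f : α → ℕ} (hf : Primrec f)
    (hP : PrimrecPred fun z : α × ℕ => P z.1 z.2) : PrimrecPred fun a => ∃ y < f a, P a y := by
  have h : PrimrecRel fun (y : ℕ) (a : α) => P a y := hP.comp (Primrec.pair Primrec.snd Primrec.fst)
  exact (h.exists_mem_list.comp (Primrec.list_range.comp hf) Primrec.id).of_eq (by simp)

theorem imp_p {P Q : α → Prop} (h : PrimrecPred P) (h' : PrimrecPred Q) :
    PrimrecPred fun a => P a → Q a :=
  (h.not.or h').of_eq fun _ => imp_iff_not_or.symm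

theorem iff_p {P Q : α → Prop} (h : PrimrecPred P) (h' : PrimrecPred Q) :
    PrimrecPred fun a => P a ↔ Q a :=
  ((imp_p h h').and (imp_p h' h)).of_eq fun _ => iff_iff_implies_and_implies.symm

theorem and_p {P Q : α → Prop} (h : PrimrecPred P) (h' : PrimrecPred Q) :
    PrimrecPred fun a => P a ∧ Q a := h.and h'

theorem or_p {P Q : α → Prop} (h : PrimrecPred P) (h' : PrimrecPred Q) :
    PrimrecPred fun a => P a ∨ Q a := h.or h'

theorem not_p {P : α → Prop} (h : PrimrecPred P) : PrimrecPred fun a => ¬ P a := h.not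

theorem eq_p {f g : α → β} (hf : Primrec f) (hg : Primrec g) :
    PrimrecPred fun a => f a = g a := Primrec.eq.comp hf hg

theorem le_p {f g : α → ℕ} (hf : Primrec f) (hg : Primrec g) :
    PrimrecPred fun a => f a ≤ g a := Primrec.nat_le.comp hf hg

theorem lt_p {f g : α → ℕ} (hf : Primrec f) (hg : Primrec g) :
    PrimrecPred fun a => f a < g a := Primrec.nat_lt.comp hf hg

theorem id_p : Primrec fun a : α => a := Primrec.id

theorem fst_p {γ : Type} [Primcodable γ] {f : α → β × γ} (h : Primrec f) :
    Primrec fun a => (f a).1 := Primrec.fst.comp h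

theorem snd_p {γ : Type} [Primcodable γ] {f : α → β × γ} (h : Primrec f) :
    Primrec fun a => (f a).2 := Primrec.snd.comp h

theorem pair_p {f g : α → ℕ} (hf : Primrec f) (hg : Primrec g) :
    Primrec fun a => Nat.pair (f a) (g a) := Primrec₂.natPair.comp hf hg

theorem unpair_p {f : α → ℕ} (hf : Primrec f) : Primrec fun a => (f a).unpair :=
  Primrec.unpair.comp hf

theorem add_p {f g : α → ℕ} (hf : Primrec f) (hg : Primrec g) :
    Primrec fun a => f a + g a := Primrec.nat_add.comp hf hg

theorem sub_p {f g : α → ℕ} (hf : Primrec f) (hg : Primrec g) :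
    Primrec fun a => f a - g a := Primrec.nat_sub.comp hf hg

theorem pow_p {f g : α → ℕ} (hf : Primrec f) (hg : Primrec g) :
    Primrec fun a => f a ^ g a :=
  (Primrec₂.unpaired'.1 Nat.Primrec.pow : Primrec₂ fun m n : ℕ => m ^ n).comp hf hg

theorem TB_p {f g : α → ℕ} (hf : Primrec f) (hg : Primrec g) :
    PrimrecPred fun a => (f a).testBit (g a) = true := by
  refine (eq_p (Primrec.nat_mod.comp (Primrec.nat_div.comp hf
    (pow_p (Primrec.const 2) hg)) (Primrec.const 2)) (Primrec.const 1)).of_eq fun a => ?_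
  rw [Nat.testBit_eq_decide_div_mod_eq, decide_eq_true_iff]

theorem TB_p' {f g : α → ℕ} (hf : Primrec f) (hg : Primrec g) :
    PrimrecPred fun a => TB (f a) (g a) := TB_p hf hg

theorem getD_p {l : α → List β} {f : α → ℕ} (d : β) (hl : Primrec l) (hf : Primrec f) :
    Primrec fun a => (l a).getD (f a) d := (Primrec.list_getD d).comp hl hf

theorem decode_p {f : α → ℕ} (d : β) (hf : Primrec f) :
    Primrec fun a => (Encodable.decode (α := β) (f a)).getD d :=
  Primrec.option_getD.comp (Primrec.decode.comp hf) (Primrec.const d)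

theorem tag_p {f : α → ℕ} (hf : Primrec f) : Primrec fun a => tag (f a) := fst_p (unpair_p hf)

theorem body_p {f : α → ℕ} (hf : Primrec f) : Primrec fun a => body (f a) := snd_p (unpair_p hf)

theorem mdata_p {f : α → ℕ} (hf : Primrec f) : Primrec fun a => mdata (f a) :=
  decode_p (β := Tab) _ (fst_p (unpair_p (body_p hf)))

theorem tst_p {f g : α → ℕ} (hf : Primrec f) (hg : Primrec g) :
    Primrec fun a => tst (f a) (g a) :=
  getD_p _ (decode_p (β := List ℕ) _ (fst_p (unpair_p (snd_p (unpair_p (body_p hf)))))) hg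

theorem sub'_p {f : α → ℕ} (hf : Primrec f) : Primrec fun a => sub (f a) :=
  snd_p (unpair_p (snd_p (unpair_p (body_p hf))))

theorem cD_p {f g h u v : α → ℕ} (hf : Primrec f) (hg : Primrec g) (hh : Primrec h)
    (hu : Primrec u) (hv : Primrec v) : Primrec fun a => cD (f a) (g a) (h a) (u a) (v a) :=
  getD_p _ (getD_p _ (getD_p _ (getD_p _ (fst_p (snd_p (snd_p (mdata_p hf)))) hg) hh) hu) hv

theorem rD_p {f g h u v : α → ℕ} (hf : Primrec f) (hg : Primrec g) (hh : Primrec h)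
    (hu : Primrec u) (hv : Primrec v) : Primrec fun a => rD (f a) (g a) (h a) (u a) (v a) :=
  getD_p _ (getD_p _ (getD_p _ (getD_p _ (fst_p (snd_p (snd_p (snd_p (mdata_p hf))))) hg) hh) hu) hv

theorem eD_p {f g h u : α → ℕ} (hf : Primrec f) (hg : Primrec g) (hh : Primrec h)
    (hu : Primrec u) : Primrec fun a => eD (f a) (g a) (h a) (u a) :=
  getD_p _ (getD_p _ (getD_p _ (fst_p (snd_p (snd_p (snd_p (snd_p (mdata_p hf)))))) hg) hh) hu

theorem lD_p {f g h u : α → ℕ} (hf : Primrec f) (hg : Primrec g) (hh : Primrec h)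
    (hu : Primrec u) : Primrec fun a => lD (f a) (g a) (h a) (u a) :=
  getD_p _ (getD_p _ (getD_p _ (fst_p (snd_p (snd_p (snd_p (snd_p (snd_p (mdata_p hf)))))))
    hg) hh) hu

theorem st_p {f g : α → ℕ} (hf : Primrec f) (hg : Primrec g) :
    Primrec fun a => st (f a) (g a) :=
  getD_p _ (fst_p (snd_p (snd_p (snd_p (snd_p (snd_p (snd_p (mdata_p hf)))))))) hg

theorem fi_p {f g : α → ℕ} (hf : Primrec f) (hg : Primrec g) :
    Primrec fun a => fi (f a) (g a) :=
  getD_p _ (snd_p (snd_p (snd_p (snd_p (snd_p (snd_p (snd_p (mdata_p hf)))))))) hg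

theorem kd_p {f g : α → ℕ} (hf : Primrec f) (hg : Primrec g) :
    Primrec fun a => kd (f a) (g a) := getD_p _ (decode_p (β := List ℕ) _ hf) hg

theorem cm_p {f : α → ℕ} (hf : Primrec f) : Primrec fun a => cm (f a) :=
  fst_p (unpair_p (sub_p hf (Primrec.const 2)))

theorem cs_p {f : α → ℕ} (hf : Primrec f) : Primrec fun a => cs (f a) :=
  snd_p (unpair_p (sub_p hf (Primrec.const 2)))

theorem K_p {f : α → ℕ} (hf : Primrec f) : Primrec fun a => K (f a) :=
  add_p (pair_p hf hf) (Primrec.const 3)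

theorem two_pow_p {f : α → ℕ} (hf : Primrec f) : Primrec fun a => 2 ^ f a :=
  pow_p (Primrec.const 2) hf

theorem RB_p {f : α → ℕ} (hf : Primrec f) : Primrec fun a => RB (f a) :=
  two_pow_p (pair_p (K_p hf) (K_p hf))

theorem CB_p {f : α → ℕ} (hf : Primrec f) : Primrec fun a => CB (f a) :=
  pair_p (Primrec.const 3) (pair_p (RB_p hf) (two_pow_p (K_p hf)))

theorem cod_p {f g h : α → ℕ} (hf : Primrec f) (hg : Primrec g) (hh : Primrec h) :
    Primrec fun a => cod (f a) (g a) (h a) := pair_p hf (pair_p hg hh)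

theorem has_p {f g h : α → ℕ} (hf : Primrec f) (hg : Primrec g) (hh : Primrec h) :
    PrimrecPred fun a => has (f a) (g a) (h a) := and_p (lt_p hh hg) (TB_p hf hh)

theorem live_p {f g : α → ℕ} (hf : Primrec f) (hg : Primrec g) :
    PrimrecPred fun a => live (f a) (g a) :=
  and_p (le_p (Primrec.const 2) hg) (has_p hf (cm_p hg) (tst_p (cm_p hg) (cs_p hg)))

theorem acc_p {f g h : α → ℕ} (hf : Primrec f) (hg : Primrec g) (hh : Primrec h) :
    PrimrecPred fun a => acc (f a) (g a) (h a) :=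
  or_p (eq_p hh (Primrec.const 0)) (or_p (and_p (eq_p hh (Primrec.const 1)) (TB_p hg hf))
    (and_p (live_p hg hh) (and_p (eq_p (fi_p (cm_p hh) (cs_p hh)) (Primrec.const true))
      (iff_p (eq_p (tag_p (cm_p hh)) (Primrec.const 4)) (has_p hg (cm_p hh) (sub'_p (cm_p hh)))))))

theorem nxt_p {f g h : α → ℕ} (hf : Primrec f) (hg : Primrec g) (hh : Primrec h) :
    PrimrecPred fun a => nxt (f a) (g a) (h a) :=
  and_p (live_p hf hg) (and_p (le_p (Primrec.const 2) hh) (eq_p (cm_p hh) (cm_p hg)))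

variable {n i l q q' g : α → ℕ}

theorem ncall_p (hn : Primrec n) (hi : Primrec i) (hl : Primrec l) (hq : Primrec q)
    (hq' : Primrec q') (hg : Primrec g) :
    PrimrecPred fun a => ncall (n a) (i a) (l a) (q a) (q' a) (g a) :=
  or_p (and_p (eq_p hq' (Primrec.const 0)) (and_p (eq_p hg (Primrec.const 0)) (acc_p hn hl hq)))
    (and_p (nxt_p hl hq hq') (eq_p (cD_p (cm_p hq) (cs_p hq) hi (cs_p hq') hg)
      (Primrec.const true)))

theorem nret_p (hn : Primrec n) (hi : Primrec i) (hl : Primrec l) (hq : Primrec q)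
    (hg : Primrec g) (hq' : Primrec q') :
    PrimrecPred fun a => nret (n a) (i a) (l a) (q a) (g a) (q' a) :=
  or_p (and_p (eq_p hq' (Primrec.const 0)) (acc_p hn hl hq))
    (and_p (nxt_p hl hq hq') (eq_p (rD_p (cm_p hq) (cs_p hq) hi hg (cs_p hq'))
      (Primrec.const true)))

theorem nret0_p (hn : Primrec n) (hi : Primrec i) (hl : Primrec l) (hq : Primrec q)
    (hq' : Primrec q') : PrimrecPred fun a => nret0 (n a) (i a) (l a) (q a) (q' a) :=
  or_p (and_p (eq_p hq' (Primrec.const 0)) (acc_p hn hl hq))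
    (and_p (nxt_p hl hq hq') (eq_p (eD_p (cm_p hq) (cs_p hq) hi (cs_p hq'))
      (Primrec.const true)))

theorem nloc_p (hn : Primrec n) (hi : Primrec i) (hl : Primrec l) (hq : Primrec q)
    (hq' : Primrec q') : PrimrecPred fun a => nloc (n a) (i a) (l a) (q a) (q' a) :=
  or_p (and_p (eq_p hq' (Primrec.const 0)) (acc_p hn hl hq))
    (and_p (nxt_p hl hq hq') (eq_p (lD_p (cm_p hq) (cs_p hq) hi (cs_p hq'))
      (Primrec.const true)))

theorem gval_p {P : α → ℕ → Prop} {m : α → ℕ} (hn : Primrec n) (hi : Primrec i)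
    (hl : Primrec l) (hP : PrimrecPred fun z : α × ℕ => P z.1 z.2) (hm : Primrec m) :
    PrimrecPred fun a => gval (n a) (i a) (l a) (P a) (m a) := by
  have hb := body_p hm
  have hc := fun c => eq_p (tag_p hm) (Primrec.const c)
  have h1 := has_p hl hm (fst_p (unpair_p hb))
  have h2 := has_p hl hm (snd_p (unpair_p hb))
  have hm' : Primrec fun z : α × ℕ => m z.1 := hm.comp Primrec.fst
  have h3 : PrimrecPred fun z : α × ℕ => P z.1 (Nat.pair (m z.1) z.2 + 2) :=
    hP.comp (f := fun z : α × ℕ => (z.1, Nat.pair (m z.1) z.2 + 2)) (Primrec.pair Primrec.fst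
      (add_p (pair_p hm' Primrec.snd) (Primrec.const 2)))
  exact or_p (and_p (hc 0) (TB_p hi hb)) (or_p (and_p (hc 1) (not_p (has_p hl hm hb)))
    (or_p (and_p (hc 2) (and_p h1 h2)) (or_p (and_p (hc 3) (or_p h1 h2))
      (and_p (le_p (Primrec.const 4) (tag_p hm)) (iff_p (hc 4)
        (ex_lt (add_p hn (Primrec.const 1))
          (and_p (eq_p (st_p hm' Primrec.snd) (Primrec.const true)) h3)))))))

variable {k u r t r₀ r₁ r₂ i' l' p c s μ : α → ℕ}

theorem isPre_p (hk : Primrec k) (hu : Primrec u) (hr : Primrec r) (ht : Primrec t) :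
    PrimrecPred fun a => isPre (k a) (u a) (r a) (t a) := by
  unfold isPre
  with_reducible repeat'
    first
    | exact Primrec.const _ | exact id_p | refine hk.comp ?_ | refine hu.comp ?_
    | refine hr.comp ?_ | refine ht.comp ?_ | apply TB_p' | apply all_lt | apply ex_lt
    | apply iff_p | apply and_p | apply fst_p | apply snd_p | apply pair_p

theorem isComp_p (hk : Primrec k) (hr : Primrec r) (hr₁ : Primrec r₁) (hr₂ : Primrec r₂) :
    PrimrecPred fun a => isComp (k a) (r a) (r₁ a) (r₂ a) := by
  unfold isComp
  with_reducible repeat'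
    first
    | exact Primrec.const _ | exact id_p | refine hk.comp ?_ | refine hr.comp ?_
    | refine hr₁.comp ?_ | refine hr₂.comp ?_ | apply TB_p' | apply all_lt | apply ex_lt
    | apply iff_p | apply and_p | apply fst_p | apply snd_p | apply pair_p

theorem isEq_p (hk : Primrec k) (hr : Primrec r) :
    PrimrecPred fun a => isEq (k a) (r a) := by
  unfold isEq
  with_reducible repeat'
    first
    | exact Primrec.const _ | exact id_p | refine hk.comp ?_ | refine hr.comp ?_ | apply TB_p'
    | apply all_lt | apply iff_p | apply eq_p | apply fst_p | apply snd_p | apply pair_p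

theorem isLoc_p (hn : Primrec n) (hi : Primrec i) (hl : Primrec l) (hr : Primrec r) :
    PrimrecPred fun a => isLoc (n a) (i a) (l a) (r a) := by
  unfold isLoc
  with_reducible repeat'
    first
    | exact Primrec.const _ | exact id_p | refine hn.comp ?_ | refine hi.comp ?_
    | refine hl.comp ?_ | refine hr.comp ?_ | apply TB_p' | apply nloc_p | apply all_lt
    | apply iff_p | apply fst_p | apply snd_p | apply pair_p | apply K_p

theorem isRet0_p (hn : Primrec n) (hi : Primrec i) (hl : Primrec l) (hr : Primrec r) :
    PrimrecPred fun a => isRet0 (n a) (i a) (l a) (r a) := by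
  unfold isRet0
  with_reducible repeat'
    first
    | exact Primrec.const _ | exact id_p | refine hn.comp ?_ | refine hi.comp ?_
    | refine hl.comp ?_ | refine hr.comp ?_ | apply TB_p' | apply nret0_p | apply all_lt
    | apply iff_p | apply fst_p | apply snd_p | apply pair_p | apply K_p

theorem isPush_p (hn : Primrec n) (hi : Primrec i) (hl : Primrec l) (hr : Primrec r) :
    PrimrecPred fun a => isPush (n a) (i a) (l a) (r a) := by
  unfold isPush
  with_reducible repeat'
    first
    | exact Primrec.const _ | exact id_p | refine hn.comp ?_ | refine hi.comp ?_
    | refine hl.comp ?_ | refine hr.comp ?_ | apply TB_p' | apply ncall_p | apply all_lt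
    | apply ex_lt | apply iff_p | apply fst_p | apply snd_p | apply pair_p | apply K_p

theorem isBlk_p (hn : Primrec n) (hi : Primrec i) (hl : Primrec l) (hr₁ : Primrec r₁)
    (hi' : Primrec i') (hl' : Primrec l') (hr : Primrec r) :
    PrimrecPred fun a => isBlk (n a) (i a) (l a) (r₁ a) (i' a) (l' a) (r a) := by
  unfold isBlk
  with_reducible repeat'
    first
    | exact Primrec.const _ | exact id_p | refine hn.comp ?_ | refine hi.comp ?_
    | refine hl.comp ?_ | refine hr₁.comp ?_ | refine hi'.comp ?_ | refine hl'.comp ?_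
    | refine hr.comp ?_ | apply TB_p' | apply ncall_p | apply nret_p | apply all_lt | apply ex_lt
    | apply iff_p | apply and_p | apply fst_p | apply snd_p | apply pair_p | apply K_p

theorem goodN_p (hn : Primrec n) (hi : Primrec i) (hl : Primrec l) (ht : Primrec t) :
    PrimrecPred fun a => goodN (n a) (i a) (l a) (t a) := by
  unfold goodN
  with_reducible repeat'
    first
    | exact Primrec.const _ | exact id_p | refine hn.comp ?_ | refine hi.comp ?_
    | refine hl.comp ?_ | refine ht.comp ?_ | apply TB_p' | apply gval_p | apply all_lt
    | apply iff_p | apply and_p | apply lt_p | apply fst_p | apply snd_p | apply add_p | apply K_p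

theorem preGood_p (hn : Primrec n) (hi : Primrec i) (hl : Primrec l) (hr : Primrec r)
    (ht : Primrec t) :
    PrimrecPred fun a => preGood (n a) (i a) (l a) (r a) (t a) := by
  unfold preGood
  with_reducible repeat'
    first
    | exact Primrec.const _ | exact id_p | refine hn.comp ?_ | refine hi.comp ?_
    | refine hl.comp ?_ | refine hr.comp ?_ | refine ht.comp ?_ | apply isPre_p | apply goodN_p
    | apply ex_lt | apply and_p | apply fst_p | apply snd_p | apply K_p | apply two_pow_p

theorem clLoc_p (hp : Primrec p) (hc : Primrec c) (hn : Primrec n) (hs : Primrec s)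
    (hr : Primrec r) (ht : Primrec t) :
    PrimrecPred fun a => clLoc (p a) (c a) (n a) (s a) (r a) (t a) := by
  unfold clLoc
  with_reducible repeat'
    first
    | exact Primrec.const _ | exact id_p | refine hp.comp ?_ | refine hc.comp ?_
    | refine hn.comp ?_ | refine hs.comp ?_ | refine hr.comp ?_ | refine ht.comp ?_ | apply TB_p'
    | apply kd_p | apply isLoc_p | apply preGood_p | apply all_lt | apply imp_p | apply le_p
    | apply fst_p | apply snd_p | apply add_p | apply cod_p | apply two_pow_p

theorem clBlk_p (hp : Primrec p) (hc : Primrec c) (hn : Primrec n) (hs : Primrec s)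
    (hr : Primrec r) (ht : Primrec t) :
    PrimrecPred fun a => clBlk (p a) (c a) (n a) (s a) (r a) (t a) := by
  unfold clBlk
  with_reducible repeat'
    first
    | exact Primrec.const _ | exact id_p | refine hp.comp ?_ | refine hc.comp ?_
    | refine hn.comp ?_ | refine hs.comp ?_ | refine hr.comp ?_ | refine ht.comp ?_ | apply TB_p'
    | apply kd_p | apply isRet0_p | apply isPre_p | apply goodN_p | apply isBlk_p
    | apply preGood_p | apply all_lt | apply imp_p | apply eq_p | apply fst_p | apply snd_p
    | apply add_p | apply K_p | apply RB_p | apply cod_p | apply two_pow_p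

theorem clRet_p (hp : Primrec p) (hc : Primrec c) (hn : Primrec n) (hs : Primrec s)
    (hr : Primrec r) (ht : Primrec t) :
    PrimrecPred fun a => clRet (p a) (c a) (n a) (s a) (r a) (t a) := by
  unfold clRet
  with_reducible repeat'
    first
    | exact Primrec.const _ | exact id_p | refine hp.comp ?_ | refine hc.comp ?_
    | refine hn.comp ?_ | refine hs.comp ?_ | refine hr.comp ?_ | refine ht.comp ?_ | apply TB_p'
    | apply kd_p | apply isRet0_p | apply preGood_p | apply all_lt | apply imp_p | apply eq_p
    | apply fst_p | apply snd_p | apply add_p | apply cod_p | apply two_pow_p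

theorem clCall_p (hp : Primrec p) (hc : Primrec c) (hn : Primrec n) (hs : Primrec s)
    (hr : Primrec r) (ht : Primrec t) :
    PrimrecPred fun a => clCall (p a) (c a) (n a) (s a) (r a) (t a) := by
  unfold clCall
  with_reducible repeat'
    first
    | exact Primrec.const _ | exact id_p | refine hp.comp ?_ | refine hc.comp ?_
    | refine hn.comp ?_ | refine hs.comp ?_ | refine hr.comp ?_ | refine ht.comp ?_ | apply TB_p'
    | apply kd_p | apply isPush_p | apply preGood_p | apply all_lt | apply imp_p | apply eq_p
    | apply fst_p | apply snd_p | apply add_p | apply cod_p | apply two_pow_p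

theorem clConcat_p (hn : Primrec n) (hs : Primrec s) (hr : Primrec r) (ht : Primrec t) :
    PrimrecPred fun a => clConcat (n a) (s a) (r a) (t a) := by
  unfold clConcat
  with_reducible repeat'
    first
    | exact Primrec.const _ | exact id_p | refine hn.comp ?_ | refine hs.comp ?_
    | refine hr.comp ?_ | refine ht.comp ?_ | apply TB_p' | apply isComp_p | apply isPre_p
    | apply all_lt | apply imp_p | apply fst_p | apply snd_p | apply K_p | apply RB_p
    | apply cod_p | apply two_pow_p

theorem ClosedN_p (hp : Primrec p) (hc : Primrec c) (hn : Primrec n) (hs : Primrec s) :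
    PrimrecPred fun a => ClosedN (p a) (c a) (n a) (s a) := by
  unfold ClosedN
  with_reducible repeat'
    first
    | exact Primrec.const _ | exact id_p | refine hp.comp ?_ | refine hc.comp ?_
    | refine hn.comp ?_ | refine hs.comp ?_ | apply TB_p' | apply isEq_p | apply clLoc_p
    | apply clBlk_p | apply clRet_p | apply clCall_p | apply clConcat_p | apply all_lt
    | apply imp_p | apply and_p | apply fst_p | apply snd_p | apply K_p | apply RB_p | apply cod_p
    | apply two_pow_p

theorem WN_p (hp : Primrec p) (hc : Primrec c) (hn : Primrec n) (hμ : Primrec μ)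
    (hr : Primrec r) (ht : Primrec t) :
    PrimrecPred fun a => WN (p a) (c a) (n a) (μ a) (r a) (t a) := by
  unfold WN
  with_reducible repeat'
    first
    | exact Primrec.const _ | exact id_p | refine hp.comp ?_ | refine hc.comp ?_
    | refine hn.comp ?_ | refine hμ.comp ?_ | refine hr.comp ?_ | refine ht.comp ?_
    | apply ClosedN_p | apply TB_p' | apply all_lt | apply imp_p | apply fst_p | apply snd_p
    | apply CB_p | apply cod_p | apply two_pow_p

theorem LoopN_p (hp : Primrec p) (hc : Primrec c) (hn : Primrec n) (hμ : Primrec μ)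
    (ht : Primrec t) :
    PrimrecPred fun a => LoopN (p a) (c a) (n a) (μ a) (t a) := by
  unfold LoopN
  with_reducible repeat'
    first
    | exact Primrec.const _ | exact id_p | refine hp.comp ?_ | refine hc.comp ?_
    | refine hn.comp ?_ | refine hμ.comp ?_ | refine ht.comp ?_ | apply WN_p | apply isPre_p
    | apply ex_lt | apply and_p | apply fst_p | apply snd_p | apply K_p | apply RB_p

/-- All quantifiers in the coded criterion are bounded by primitive recursive functions, so it is a
primitive recursive predicate. -/
theorem CritN_p (hp : Primrec p) (hc : Primrec c) (hn : Primrec n) :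
    PrimrecPred fun a => CritN (p a) (c a) (n a) := by
  unfold CritN
  with_reducible repeat'
    first
    | exact Primrec.const _ | exact id_p | refine hp.comp ?_ | refine hc.comp ?_
    | refine hn.comp ?_ | apply WN_p | apply LoopN_p | apply isPre_p | apply TB_p' | apply ex_lt
    | apply and_p | apply or_p | apply fst_p | apply snd_p | apply K_p | apply RB_p
    | apply two_pow_p

end Prim

end VCode

/-- The satisfiability problem for VLDL is decidable: there is a
computable function that, given the encoding of the number `p` of atomic propositions,
of a partition of `2^P` into calls, returns and local actions, and of a VLDL formula
`φ` over this pushdown alphabet, decides whether `φ` has a model. -/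
theorem vldl_satisfiability_decidable :
    ∃ f : ℕ → Bool, Computable f ∧
      ∀ (p : ℕ) (kind : (Fin p → Bool) → SymKind) (φ : VLDL (Fin p) (Fin p → Bool)),
        (f (Nat.pair p (Nat.pair (kindCode p kind) φ.code)) = true ↔
          ∃ α : ℕ → (Fin p → Bool), VLDL.sat (fun v a => a v = true) kind φ α 0) := by
  have hc : PrimrecPred fun X : ℕ =>
      VCode.CritN X.unpair.1 X.unpair.2.unpair.1 X.unpair.2.unpair.2 :=
    VCode.CritN_p (VCode.fst_p Primrec.unpair)
      (VCode.fst_p (VCode.unpair_p (VCode.snd_p Primrec.unpair)))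
      (VCode.snd_p (VCode.unpair_p (VCode.snd_p Primrec.unpair)))
  obtain ⟨_, hc⟩ := hc
  refine ⟨_, hc.to_comp, fun p kind φ => ?_⟩
  rw [decide_eq_true_iff, VCode.sat_iff_crit, ← VCode.critN_iff]
  simp only [Nat.unpair_pair]
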